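/- arXiv:2008.00738 — 3 statements merged into one kernel-verified Lean document; each statement's English description precedes it below -/
import Mathlib

section
/- Let α, β, γ, δ > 0 with max{α,β} ≤ min{γ,δ}. Let n ≥ 1 and let T : ℤⁿ×ℤⁿ → ℤⁿ be translation equivariant and monotone in the sense of Knothe. Suppose f, g, h, k : ℤⁿ → [0,∞) satisfy f(x)^α · g(y)^β ≤ h(T(x,y))^γ · k(x+y−T(x,y))^δ for all x, y ∈ ℤⁿ. Then (∑_{x∈ℤⁿ} f(x))^α · (∑_{x∈ℤⁿ} g(x))^β ≤ (∑_{x∈ℤⁿ} h(x))^γ · (∑_{x∈ℤⁿ} k(x))^δ, where the sums are taken in the extended nonnegative reals [0,∞]. -/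
open scoped BigOperators ENNReal NNReal

/-- A *total additive ordering* on an abelian group `G`: a linear order (given as
a relation `r`, meaning `r a b ↔ a ⪯ b`) compatible with addition. -/
def TotalAdditiveOrdering {G : Type*} [AddCommGroup G] (r : G → G → Prop) : Prop :=
  (∀ a, r a a) ∧ (∀ a b, r a b → r b a → a = b) ∧
  (∀ a b c, r a b → r b c → r a c) ∧ (∀ a b, r a b ∨ r b a) ∧
  (∀ a b c, r a b → r (a + c) (b + c))

/-- `u` is the minimal positive element of the ordering `r`, i.e. the minimum of
`{g : 0 ≺ g}`. -/
def IsMinimalPositive {G : Type*} [AddCommGroup G] (r : G → G → Prop) (u : G) : Prop :=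
  (r 0 u ∧ u ≠ 0) ∧ ∀ g, r 0 g → g ≠ 0 → r u g

/-- `T` is translation equivariant: `T (x+z) (y+z) = T x y + z`. -/
def TranslationEquivariant {G : Type*} [AddCommGroup G] (T : G → G → G) : Prop :=
  ∀ x y z, T (x + z) (y + z) = T x y + z

/-- `T : ℤⁿ × ℤⁿ → ℤⁿ` is triangular and monotone with respect to the decomposition
`ℤⁿ = G₁ × ⋯ × G_k` (encoded by the additive equivalence `e`, with `Gᵢ = ℤ^(ℓ i)`) and the
orderings `ord i` on the blocks: (i) the `i`-th block of `T x y` depends only on the blocks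
`≤ i` of `x` and `y`; (ii) fixing the blocks `< i`, the `i`-th block of `T` is nondecreasing
in the `i`-th blocks of both arguments. -/
def KnotheWith {n k : ℕ} (ℓ : Fin k → ℕ)
    (e : (Fin n → ℤ) ≃+ ((i : Fin k) → Fin (ℓ i) → ℤ))
    (ord : (i : Fin k) → (Fin (ℓ i) → ℤ) → (Fin (ℓ i) → ℤ) → Prop)
    (T : (Fin n → ℤ) → (Fin n → ℤ) → (Fin n → ℤ)) : Prop :=
  (∀ (i : Fin k) (x y x' y' : Fin n → ℤ),
      (∀ j, j ≤ i → e x j = e x' j ∧ e y j = e y' j) →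
      e (T x y) i = e (T x' y') i) ∧
  (∀ (i : Fin k) (x y x' y' : Fin n → ℤ),
      (∀ j, j < i → e x j = e x' j ∧ e y j = e y' j) →
      ord i (e x i) (e x' i) → ord i (e y i) (e y' i) →
      ord i (e (T x y) i) (e (T x' y') i))

/-- `T` is monotone in the sense of Knothe: there is a decomposition
`ℤⁿ = G₁ × ⋯ × G_k` with `Gᵢ = ℤ^(ℓᵢ)`, `ℓ₁ + ⋯ + ℓ_k = n`, together with total additive
orderings on the `Gᵢ`, each admitting a minimal positive element, with respect to which `T`
is triangular and monotone. -/
def KnotheMonotone {n : ℕ} (T : (Fin n → ℤ) → (Fin n → ℤ) → (Fin n → ℤ)) : Prop :=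
  ∃ (k : ℕ) (_ : 1 ≤ k) (ℓ : Fin k → ℕ) (_ : ∑ i, ℓ i = n)
    (e : (Fin n → ℤ) ≃+ ((i : Fin k) → Fin (ℓ i) → ℤ))
    (ord : (i : Fin k) → (Fin (ℓ i) → ℤ) → (Fin (ℓ i) → ℤ) → Prop),
    (∀ i, TotalAdditiveOrdering (ord i) ∧ ∃ u, IsMinimalPositive (ord i) u) ∧
    KnotheWith ℓ e ord T

lemma monotone_nat_mul_log_diff :
    Monotone fun r : ℕ ↦ ((r + 1 : ℕ) : ℝ) * Real.log ((r + 1 : ℕ) : ℝ) - r * Real.log r := by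
  refine monotone_nat_of_le_succ fun r ↦ ?_
  have hr : (r : ℝ) ∈ Set.Ici 0 := by simp
  have hr' : (r : ℝ) + 2 ∈ Set.Ici 0 := by simp only [Set.mem_Ici]; positivity
  have h := Real.convexOn_mul_log.2 hr hr' (show (0 : ℝ) ≤ 1 / 2 by norm_num)
    (show (0 : ℝ) ≤ 1 / 2 by norm_num) (by norm_num)
  have e : (1 / 2 : ℝ) • (r : ℝ) + (1 / 2 : ℝ) • ((r : ℝ) + 2) = r + 1 := by
    simp only [smul_eq_mul]; ring
  rw [e] at h
  simp only [smul_eq_mul] at h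
  push_cast
  rw [show (r : ℝ) + 1 + 1 = r + 2 by ring]
  linarith

/-- Telescoping along a finite subset of a linear order. -/
lemma Finset.sum_diff_card_filter_lt {ι : Type*} [LinearOrder ι] (φ : ℕ → ℝ) (hφ : φ 0 = 0)
    (A : Finset ι) :
    ∑ i ∈ A, (φ ((A.filter (i < ·)).card + 1) - φ (A.filter (i < ·)).card) = φ A.card := by
  induction A using Finset.induction_on_min with
  | empty => simp [hφ]
  | insert a A ha ih =>
    have ha' : a ∉ A := fun h ↦ lt_irrefl _ (ha a h)
    rw [Finset.sum_insert ha', Finset.card_insert_of_notMem ha']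
    have h1 : (insert a A).filter (a < ·) = A := by
      ext j; simp only [Finset.mem_filter, Finset.mem_insert]
      constructor
      · rintro ⟨rfl | h, h'⟩
        · exact absurd h' (lt_irrefl _)
        · exact h
      · exact fun h ↦ ⟨Or.inr h, ha j h⟩
    have h2 : ∀ i ∈ A, (insert a A).filter (i < ·) = A.filter (i < ·) := by
      intro i hi
      rw [Finset.filter_insert, if_neg (ha i hi).asymm]
    rw [h1, Finset.sum_congr rfl fun i hi ↦ by rw [h2 i hi], ih]
    ring

/-- The (unnormalized) entropy of the law of `U` under the uniform measure, expressed through the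
number of later occurrences of each value. -/
lemma sum_log_card_fiber {ι G : Type*} [LinearOrder ι] [Fintype ι] [DecidableEq G] (U : ι → G) :
    ∑ i, Real.log ((Finset.univ.filter fun j ↦ U j = U i).card : ℝ) =
      ∑ i, ((((Finset.univ.filter fun j ↦ i < j ∧ U j = U i).card + 1 : ℕ) : ℝ) *
          Real.log (((Finset.univ.filter fun j ↦ i < j ∧ U j = U i).card + 1 : ℕ) : ℝ) -
        ((Finset.univ.filter fun j ↦ i < j ∧ U j = U i).card : ℝ) *
          Real.log ((Finset.univ.filter fun j ↦ i < j ∧ U j = U i).card : ℝ)) := by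
  have hmap : ∀ i ∈ (Finset.univ : Finset ι), U i ∈ Finset.univ.image U := by simp
  rw [← Finset.sum_fiberwise_of_maps_to hmap, ← Finset.sum_fiberwise_of_maps_to hmap]
  refine Finset.sum_congr rfl fun x _ ↦ ?_
  have key := Finset.sum_diff_card_filter_lt (fun n : ℕ ↦ (n : ℝ) * Real.log n) (by simp)
    (Finset.univ.filter fun j ↦ U j = x)
  calc _ = ∑ i ∈ Finset.univ.filter fun j ↦ U j = x,
        Real.log ((Finset.univ.filter fun j ↦ U j = x).card : ℝ) :=
        Finset.sum_congr rfl fun i hi ↦ by rw [(Finset.mem_filter.1 hi).2]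
    _ = _ := by
      rw [Finset.sum_const, nsmul_eq_mul, ← key]
      refine Finset.sum_congr rfl fun i hi ↦ ?_
      rw [(Finset.mem_filter.1 hi).2, Finset.filter_filter]
      simp only [and_comm]

lemma Monotone.filter_subset_or {ι G H : Type*} [LinearOrder ι] [Fintype ι] [LinearOrder G]
    [LinearOrder H] {U : ι → G} {V : ι → H} (hU : Monotone U) (hV : Monotone V) (i : ι) :
    (Finset.univ.filter fun j ↦ i < j ∧ U j = U i) ⊆
        (Finset.univ.filter fun j ↦ i < j ∧ V j = V i) ∨
      (Finset.univ.filter fun j ↦ i < j ∧ V j = V i) ⊆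
        (Finset.univ.filter fun j ↦ i < j ∧ U j = U i) := by
  by_contra! hc
  obtain ⟨h1, h2⟩ := hc
  rw [Finset.not_subset] at h1 h2
  obtain ⟨j, hj, hj'⟩ := h1
  obtain ⟨l, hl, hl'⟩ := h2
  simp only [Finset.mem_filter, Finset.mem_univ, true_and, not_and] at hj hj' hl hl'
  rcases le_total j l with h | h
  · exact hj' hj.1 (le_antisymm (hl.2 ▸ hV h) (hV hj.1.le))
  · exact hl' hl.1 (le_antisymm (hj.2 ▸ hU h) (hU hl.1.le))

lemma Finset.add_card_le_of_nested {ι : Type*} [DecidableEq ι] {ψ : ℕ → ℝ} (hψ : Monotone ψ)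
    {A B C D : Finset ι} (hAB : A ⊆ B ∨ B ⊆ A) (hCD : C ⊆ D ∨ D ⊆ C) (hC : C ⊆ A ∪ B)
    (hD : D ⊆ A ∪ B) (hI : C ∩ D ⊆ A ∩ B) :
    ψ C.card + ψ D.card ≤ ψ A.card + ψ B.card := by
  have mono : ∀ {P Q : Finset ι}, P ⊆ Q → ψ P.card ≤ ψ Q.card :=
    fun h ↦ hψ (Finset.card_le_card h)
  rcases hAB with h | h <;> rcases hCD with h' | h' <;>
    simp only [Finset.union_eq_right.2 h, Finset.union_eq_left.2 h, Finset.inter_eq_left.2 h,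
      Finset.inter_eq_right.2 h, Finset.inter_eq_left.2 h', Finset.inter_eq_right.2 h']
      at hC hD hI <;>
    linarith [mono hC, mono hD, mono hI]

/-- The operation `(x, y) ↦ x + y - T x y` complementary to `T`. -/
def complementary {G : Type*} [AddCommGroup G] (T : G → G → G) (x y : G) : G := x + y - T x y

lemma TranslationEquivariant.complementary {G : Type*} [AddCommGroup G]
    {T : G → G → G} (hT : TranslationEquivariant T) :
    TranslationEquivariant (complementary T) := by
  intro x y z
  simp only [_root_.complementary, hT x y z]
  abel

section OrderedGroup

variable {G : Type*} [AddCommGroup G] [LinearOrder G] [IsOrderedAddMonoid G]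

lemma complementary_mono {T : G → G → G} (hT : TranslationEquivariant T)
    (hm : ∀ ⦃x x' y y'⦄, x ≤ x' → y ≤ y' → T x y ≤ T x' y') ⦃x x' y y' : G⦄
    (hx : x ≤ x') (hy : y ≤ y') : complementary T x y ≤ complementary T x' y' := by
  have h : T x' y' ≤ T x y + ((x' - x) + (y' - y)) := by
    rw [← hT]
    refine hm ?_ ?_
    · rw [← sub_nonneg]
      have : x + (x' - x + (y' - y)) - x' = y' - y := by abel
      rw [this]; exact sub_nonneg.2 hy
    · rw [← sub_nonneg]
      have : y + (x' - x + (y' - y)) - y' = x' - x := by abel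
      rw [this]; exact sub_nonneg.2 hx
  unfold complementary
  rw [sub_le_sub_iff]
  calc x + y + T x' y' ≤ x + y + (T x y + ((x' - x) + (y' - y))) := by gcongr
    _ = x' + y' + T x y := by abel

lemma TranslationEquivariant.eq_or_eq_of_eq {T : G → G → G} (hT : TranslationEquivariant T)
    (hm : ∀ ⦃x x' y y'⦄, x ≤ x' → y ≤ y' → T x y ≤ T x' y') {x x' y y' : G}
    (hx : x ≤ x') (hy : y ≤ y') (h : T x' y' = T x y) : x' = x ∨ y' = y := by
  by_contra! hc
  have hz : 0 < min (x' - x) (y' - y) :=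
    lt_min (sub_pos.2 (hx.lt_of_ne' hc.1)) (sub_pos.2 (hy.lt_of_ne' hc.2))
  have : T (x + min (x' - x) (y' - y)) (y + min (x' - x) (y' - y)) ≤ T x' y' :=
    hm (by rw [← le_sub_iff_add_le']; exact min_le_left _ _)
      (by rw [← le_sub_iff_add_le']; exact min_le_right _ _)
  rw [hT, h] at this
  exact absurd this (not_le.2 (lt_add_of_pos_right _ hz))

/-- Entropy does not decrease under the monotone coupling. -/
lemma sum_log_card_fiber_le {ι : Type*} [LinearOrder ι] [Fintype ι] {T : G → G → G}
    (hT : TranslationEquivariant T)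
    (hm : ∀ ⦃x x' y y'⦄, x ≤ x' → y ≤ y' → T x y ≤ T x' y') {X Y : ι → G}
    (hX : Monotone X) (hY : Monotone Y) :
    ∑ i, Real.log ((Finset.univ.filter fun j ↦ T (X j) (Y j) = T (X i) (Y i)).card : ℝ) +
      ∑ i, Real.log ((Finset.univ.filter fun j ↦
        complementary T (X j) (Y j) = complementary T (X i) (Y i)).card : ℝ) ≤
    ∑ i, Real.log ((Finset.univ.filter fun j ↦ X j = X i).card : ℝ) +
      ∑ i, Real.log ((Finset.univ.filter fun j ↦ Y j = Y i).card : ℝ) := by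
  have hS := complementary_mono hT hm
  rw [sum_log_card_fiber X, sum_log_card_fiber Y, sum_log_card_fiber fun i ↦ T (X i) (Y i),
    sum_log_card_fiber fun i ↦ complementary T (X i) (Y i), ← Finset.sum_add_distrib,
    ← Finset.sum_add_distrib]
  refine Finset.sum_le_sum fun i _ ↦ ?_
  refine Finset.add_card_le_of_nested monotone_nat_mul_log_diff (hX.filter_subset_or hY i)
    (Monotone.filter_subset_or (fun i j h ↦ hm (hX h) (hY h)) (fun i j h ↦ hS (hX h) (hY h)) i)
    ?_ ?_ ?_
  · intro j
    simp only [Finset.mem_union, Finset.mem_filter, Finset.mem_univ, true_and]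
    rintro ⟨hij, h⟩
    have := hT.eq_or_eq_of_eq hm (hX hij.le) (hY hij.le) h
    tauto
  · intro j
    simp only [Finset.mem_union, Finset.mem_filter, Finset.mem_univ, true_and]
    rintro ⟨hij, h⟩
    have := hT.complementary.eq_or_eq_of_eq hS (hX hij.le) (hY hij.le) h
    tauto
  · intro j
    simp only [Finset.mem_inter, Finset.mem_filter, Finset.mem_univ, true_and]
    rintro ⟨⟨hij, h⟩, -, h'⟩
    have hsum : X i + Y i = X j + Y j := by
      unfold complementary at h'
      rw [h] at h'
      exact (sub_left_injective h').symm
    have := (add_eq_add_iff_eq_and_eq (hX hij.le) (hY hij.le)).1 hsum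
    exact ⟨⟨hij, this.1.symm⟩, hij, this.2.symm⟩

end OrderedGroup

/-- Gibbs' inequality for an empirical measure. -/
lemma sum_log_le_of_sum_le {ι G : Type*} [Fintype ι] [DecidableEq G] (U : ι → G)
    (h : G → ℝ) {H : ℝ} (hpos : ∀ i, 0 < h (U i)) (hH : 0 < H)
    (hsum : ∑ x ∈ Finset.univ.image U, h x ≤ H) :
    ∑ i, Real.log (h (U i)) ≤ Fintype.card ι * Real.log H -
      (Fintype.card ι * Real.log (Fintype.card ι) -
        ∑ i, Real.log ((Finset.univ.filter fun j ↦ U j = U i).card : ℝ)) := by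
  rcases isEmpty_or_nonempty ι with hι | hι
  · simp
  have hN : (0 : ℝ) < Fintype.card ι := by exact_mod_cast Fintype.card_pos
  have hc : ∀ i, (0 : ℝ) < ((Finset.univ.filter fun j ↦ U j = U i).card : ℝ) := fun i ↦ by
    exact_mod_cast Finset.card_pos.2 ⟨i, by simp⟩
  have hfib : ∑ i, h (U i) / ((Finset.univ.filter fun j ↦ U j = U i).card : ℝ) ≤ H := by
    refine le_trans (le_of_eq ?_) hsum
    have hmap : ∀ i ∈ (Finset.univ : Finset ι), U i ∈ Finset.univ.image U := by simp
    rw [← Finset.sum_fiberwise_of_maps_to hmap]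
    refine Finset.sum_congr rfl fun x hx ↦ ?_
    obtain ⟨i, -, rfl⟩ := Finset.mem_image.1 hx
    rw [Finset.sum_congr rfl fun j hj ↦ by rw [(Finset.mem_filter.1 hj).2], Finset.sum_const,
      nsmul_eq_mul]
    field_simp [(hc i).ne']
  have hpt : ∀ i, Real.log (h (U i)) + Real.log (Fintype.card ι) -
      Real.log ((Finset.univ.filter fun j ↦ U j = U i).card : ℝ) - Real.log H ≤
      h (U i) / ((Finset.univ.filter fun j ↦ U j = U i).card : ℝ) *
        (Fintype.card ι / H) - 1 := by
    intro i
    have := Real.log_le_sub_one_of_pos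
      (mul_pos (div_pos (hpos i) (hc i)) (div_pos hN hH))
    rw [Real.log_mul (div_pos (hpos i) (hc i)).ne' (div_pos hN hH).ne',
      Real.log_div (hpos i).ne' (hc i).ne', Real.log_div hN.ne' hH.ne'] at this
    linarith
  have := Finset.sum_le_sum fun i (_ : i ∈ Finset.univ) ↦ hpt i
  simp only [Finset.sum_sub_distrib, Finset.sum_add_distrib, Finset.sum_const, Finset.card_univ,
    nsmul_eq_mul, ← Finset.sum_mul, mul_one] at this
  have h2 : (∑ i, h (U i) / ((Finset.univ.filter fun j ↦ U j = U i).card : ℝ)) *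
      (Fintype.card ι / H) ≤ H * (Fintype.card ι / H) := by gcongr
  rw [mul_div_cancel₀ _ hH.ne'] at h2
  linarith

lemma exists_monotone_card_fiber {G : Type*} [LinearOrder G] (s : Finset G) (m : G → ℕ) {N : ℕ}
    (hN : ∑ x ∈ s, m x = N) :
    ∃ X : Fin N → G, Monotone X ∧ (∀ i, X i ∈ s) ∧
      ∀ i, (Finset.univ.filter fun j ↦ X j = X i).card = m (X i) := by
  have hcard : Fintype.card (Σ x : s, Fin (m x)) = N := by
    rw [Fintype.card_sigma, ← hN, ← Finset.sum_coe_sort s]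
    simp
  let e := (Fintype.equivFinOfCardEq hcard).symm
  let X₀ : Fin N → G := fun i ↦ (e i).1
  let e' := (Tuple.sort X₀).trans e
  refine ⟨X₀ ∘ Tuple.sort X₀, Tuple.monotone_sort X₀, fun i ↦ (e (Tuple.sort X₀ i)).1.2,
    fun i ↦ ?_⟩
  set x : s := (e' i).1 with hx
  calc (Finset.univ.filter fun j ↦ (X₀ ∘ Tuple.sort X₀) j = (X₀ ∘ Tuple.sort X₀) i).card
      = (Finset.univ.filter fun p : Σ x : s, Fin (m x) ↦ p.1 = x).card := by
        refine Finset.card_equiv e' fun j ↦ ?_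
        simp only [Finset.mem_filter, Finset.mem_univ, true_and]
        exact Subtype.ext_iff.symm
    _ = Fintype.card {p : Σ x : s, Fin (m x) // p.1 = x} := (Fintype.card_subtype _).symm
    _ = Fintype.card (Fin (m x)) := Fintype.card_congr (Equiv.sigmaSubtype x)
    _ = m x := Fintype.card_fin _

section OrderedGroup

variable {G : Type*} [AddCommGroup G] [LinearOrder G] [IsOrderedAddMonoid G]
  {α β γ δ : ℝ} {T : G → G → G}

lemma brunn_minkowski_of_coupling (hα : 0 < α) (hγ : 0 < γ) (hδ : 0 < δ)
    (hmix : max α β ≤ min γ δ) (hT : TranslationEquivariant T)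
    (hm : ∀ ⦃x x' y y'⦄, x ≤ x' → y ≤ y' → T x y ≤ T x' y')
    {ι : Type*} [LinearOrder ι] [Fintype ι] [Nonempty ι] {X Y : ι → G}
    (hX : Monotone X) (hY : Monotone Y) {a b : ℝ} (ha : 0 < a) (hb : 0 < b)
    {h k : G → ℝ} (h0 : ∀ x, 0 ≤ h x) (k0 : ∀ x, 0 ≤ k x) {H K : ℝ}
    (hH : ∀ s : Finset G, ∑ x ∈ s, h x ≤ H) (hK : ∀ s : Finset G, ∑ x ∈ s, k x ≤ K)
    (hyp : ∀ i, (a * (Finset.univ.filter fun j ↦ X j = X i).card) ^ α *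
      (b * (Finset.univ.filter fun j ↦ Y j = Y i).card) ^ β ≤
      h (T (X i) (Y i)) ^ γ * k (complementary T (X i) (Y i)) ^ δ) :
    (a * Fintype.card ι) ^ α * (b * Fintype.card ι) ^ β ≤ H ^ γ * K ^ δ := by
  have hc : ∀ (U : ι → G) i, (0 : ℝ) < ((Finset.univ.filter fun j ↦ U j = U i).card : ℝ) :=
    fun U i ↦ by exact_mod_cast Finset.card_pos.2 ⟨i, by simp⟩
  have hN : (0 : ℝ) < Fintype.card ι := by exact_mod_cast Fintype.card_pos
  have hpos : ∀ i, 0 < h (T (X i) (Y i)) ^ γ * k (complementary T (X i) (Y i)) ^ δ := fun i ↦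
    lt_of_lt_of_le (mul_pos (Real.rpow_pos_of_pos (mul_pos ha (hc X i)) _)
      (Real.rpow_pos_of_pos (mul_pos hb (hc Y i)) _)) (hyp i)
  have hhpos : ∀ i, 0 < h (T (X i) (Y i)) := fun i ↦ by
    refine (h0 _).lt_of_ne' fun h ↦ (hpos i).ne' ?_
    rw [h, Real.zero_rpow hγ.ne', zero_mul]
  have hkpos : ∀ i, 0 < k (complementary T (X i) (Y i)) := fun i ↦ by
    refine (k0 _).lt_of_ne' fun h ↦ (hpos i).ne' ?_
    rw [h, Real.zero_rpow hδ.ne', mul_zero]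
  obtain ⟨i₀⟩ := ‹Nonempty ι›
  have hHpos : 0 < H := (hhpos i₀).trans_le (by simpa using hH {T (X i₀) (Y i₀)})
  have hKpos : 0 < K := (hkpos i₀).trans_le (by simpa using hK {complementary T (X i₀) (Y i₀)})
  have gT := sum_log_le_of_sum_le (fun i ↦ T (X i) (Y i)) h hhpos hHpos (hH _)
  have gS := sum_log_le_of_sum_le (fun i ↦ complementary T (X i) (Y i)) k hkpos hKpos (hK _)
  have hent := sum_log_card_fiber_le hT hm hX hY
  have hlog : ∀ i, α * (Real.log a + Real.log (Finset.univ.filter fun j ↦ X j = X i).card) +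
      β * (Real.log b + Real.log (Finset.univ.filter fun j ↦ Y j = Y i).card) ≤
      γ * Real.log (h (T (X i) (Y i))) + δ * Real.log (k (complementary T (X i) (Y i))) := by
    intro i
    have p1 := mul_pos ha (hc X i)
    have p2 := mul_pos hb (hc Y i)
    have := Real.log_le_log (mul_pos (Real.rpow_pos_of_pos p1 _) (Real.rpow_pos_of_pos p2 _))
      (hyp i)
    rwa [Real.log_mul (Real.rpow_pos_of_pos p1 _).ne' (Real.rpow_pos_of_pos p2 _).ne',
      Real.log_mul (Real.rpow_pos_of_pos (hhpos i) _).ne' (Real.rpow_pos_of_pos (hkpos i) _).ne',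
      Real.log_rpow p1, Real.log_rpow p2, Real.log_rpow (hhpos i), Real.log_rpow (hkpos i),
      Real.log_mul ha.ne' (hc X i).ne', Real.log_mul hb.ne' (hc Y i).ne'] at this
  have hsum := Finset.sum_le_sum fun i (_ : i ∈ Finset.univ) ↦ hlog i
  simp only [Finset.sum_add_distrib, ← Finset.mul_sum, Finset.sum_const, Finset.card_univ,
    nsmul_eq_mul] at hsum
  have hE : ∀ U : ι → G, ∑ i, Real.log ((Finset.univ.filter fun j ↦ U j = U i).card : ℝ) ≤
      Fintype.card ι * Real.log (Fintype.card ι) := by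
    intro U
    calc _ ≤ ∑ _i : ι, Real.log (Fintype.card ι) := Finset.sum_le_sum fun i _ ↦
          Real.log_le_log (hc U i) (by exact_mod_cast Finset.card_le_univ _)
      _ = _ := by simp
  have eX := hE X
  have eY := hE Y
  have eT := hE fun i ↦ T (X i) (Y i)
  have eS := hE fun i ↦ complementary T (X i) (Y i)
  have q1 := mul_pos ha hN
  have q2 := mul_pos hb hN
  rw [← Real.log_le_log_iff (mul_pos (Real.rpow_pos_of_pos q1 _) (Real.rpow_pos_of_pos q2 _))
      (mul_pos (Real.rpow_pos_of_pos hHpos _) (Real.rpow_pos_of_pos hKpos _)),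
    Real.log_mul (Real.rpow_pos_of_pos q1 _).ne' (Real.rpow_pos_of_pos q2 _).ne',
    Real.log_mul (Real.rpow_pos_of_pos hHpos _).ne' (Real.rpow_pos_of_pos hKpos _).ne',
    Real.log_rpow q1, Real.log_rpow q2, Real.log_rpow hHpos, Real.log_rpow hKpos,
    Real.log_mul ha.ne' hN.ne', Real.log_mul hb.ne' hN.ne']
  refine le_of_mul_le_mul_left ?_ hN
  generalize (Fintype.card ι : ℝ) = N at *
  generalize Real.log a = la at *
  generalize Real.log b = lb at *
  generalize Real.log H = lH at *
  generalize Real.log K = lK at *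
  generalize Real.log N = lN at *
  generalize ∑ i, Real.log ((Finset.univ.filter fun j ↦ X j = X i).card : ℝ) = sX at *
  generalize ∑ i, Real.log ((Finset.univ.filter fun j ↦ Y j = Y i).card : ℝ) = sY at *
  generalize ∑ i, Real.log ((Finset.univ.filter fun j ↦
    T (X j) (Y j) = T (X i) (Y i)).card : ℝ) = sT at *
  generalize ∑ i, Real.log ((Finset.univ.filter fun j ↦
    complementary T (X j) (Y j) = complementary T (X i) (Y i)).card : ℝ) = sS at *
  have m1 := mul_le_mul_of_nonneg_left gT hγ.le
  have m2 := mul_le_mul_of_nonneg_left gS hδ.le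
  have n1 := mul_le_mul_of_nonneg_right ((le_max_left α β)) (sub_nonneg.2 eX)
  have n2 := mul_le_mul_of_nonneg_right ((le_max_right α β)) (sub_nonneg.2 eY)
  have n3 := mul_le_mul_of_nonneg_right (hmix.trans (min_le_left γ δ)) (sub_nonneg.2 eT)
  have n4 := mul_le_mul_of_nonneg_right (hmix.trans (min_le_right γ δ)) (sub_nonneg.2 eS)
  have n5 := mul_le_mul_of_nonneg_left hent (hα.le.trans (le_max_left α β))
  linarith

lemma brunn_minkowski_of_counts (hα : 0 < α) (hβ : 0 < β) (hγ : 0 < γ) (hδ : 0 < δ)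
    (hmix : max α β ≤ min γ δ) (hT : TranslationEquivariant T)
    (hm : ∀ ⦃x x' y y'⦄, x ≤ x' → y ≤ y' → T x y ≤ T x' y')
    (s t : Finset G) (m l : G → ℕ) {a : ℝ} (ha : 0 < a)
    {h k : G → ℝ} (h0 : ∀ x, 0 ≤ h x) (k0 : ∀ x, 0 ≤ k x) {H K : ℝ}
    (hH : ∀ s : Finset G, ∑ x ∈ s, h x ≤ H) (hK : ∀ s : Finset G, ∑ x ∈ s, k x ≤ K)
    (hyp : ∀ x y, (a * m x) ^ α * (a * l y) ^ β ≤ h (T x y) ^ γ * k (complementary T x y) ^ δ) :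
    (∑ x ∈ s, a * m x) ^ α * (∑ y ∈ t, a * l y) ^ β ≤ H ^ γ * K ^ δ := by
  have hH0 : 0 ≤ H := by simpa using hH ∅
  have hK0 : 0 ≤ K := by simpa using hK ∅
  have hR : 0 ≤ H ^ γ * K ^ δ := mul_nonneg (Real.rpow_nonneg hH0 _) (Real.rpow_nonneg hK0 _)
  rw [← Finset.mul_sum, ← Finset.mul_sum, ← Nat.cast_sum, ← Nat.cast_sum]
  rcases Nat.eq_zero_or_pos (∑ x ∈ s, m x) with hM | hM
  · simpa [hM, Real.zero_rpow hα.ne'] using hR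
  rcases Nat.eq_zero_or_pos (∑ y ∈ t, l y) with hL | hL
  · simpa [hL, Real.zero_rpow hβ.ne'] using hR
  set M := ∑ x ∈ s, m x with hMdef
  set L := ∑ y ∈ t, l y with hLdef
  obtain ⟨X, hX, -, hXc⟩ := exists_monotone_card_fiber s (fun x ↦ m x * L) (N := M * L)
    (by rw [← Finset.sum_mul])
  obtain ⟨Y, hY, -, hYc⟩ := exists_monotone_card_fiber t (fun x ↦ M * l x) (N := M * L)
    (by rw [← Finset.mul_sum])
  have : Nonempty (Fin (M * L)) := ⟨⟨0, Nat.mul_pos hM hL⟩⟩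
  have hM' : (0 : ℝ) < M := by exact_mod_cast hM
  have hL' : (0 : ℝ) < L := by exact_mod_cast hL
  have key := brunn_minkowski_of_coupling hα hγ hδ hmix hT hm hX hY (div_pos ha hL')
    (div_pos ha hM') h0 k0 hH hK fun i ↦ by
      rw [hXc, hYc]
      convert hyp (X i) (Y i) using 3 <;> push_cast <;> field_simp
  rw [Fintype.card_fin] at key
  convert key using 3 <;> push_cast <;> field_simp

lemma brunn_minkowski_finset (hα : 0 < α) (hβ : 0 < β) (hγ : 0 < γ) (hδ : 0 < δ)
    (hmix : max α β ≤ min γ δ) (hT : TranslationEquivariant T)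
    (hm : ∀ ⦃x x' y y'⦄, x ≤ x' → y ≤ y' → T x y ≤ T x' y')
    (s t : Finset G) {f g h k : G → ℝ} (f0 : ∀ x, 0 ≤ f x) (g0 : ∀ x, 0 ≤ g x)
    (h0 : ∀ x, 0 ≤ h x) (k0 : ∀ x, 0 ≤ k x) {H K : ℝ}
    (hH : ∀ s : Finset G, ∑ x ∈ s, h x ≤ H) (hK : ∀ s : Finset G, ∑ x ∈ s, k x ≤ K)
    (hyp : ∀ x y, f x ^ α * g y ^ β ≤ h (T x y) ^ γ * k (complementary T x y) ^ δ) :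
    (∑ x ∈ s, f x) ^ α * (∑ y ∈ t, g y) ^ β ≤ H ^ γ * K ^ δ := by
  have lim : ∀ (s : Finset G) {f : G → ℝ}, (∀ x, 0 ≤ f x) → ∀ {α : ℝ}, 0 < α →
      Filter.Tendsto (fun R : ℝ ↦ (∑ x ∈ s, R⁻¹ * (⌊f x * R⌋₊ : ℝ)) ^ α) Filter.atTop
        (nhds ((∑ x ∈ s, f x) ^ α)) := by
    intro s f f0 α hα
    refine Filter.Tendsto.rpow_const ?_ (Or.inr hα.le)
    refine tendsto_finsetSum s fun x _ ↦ ?_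
    simpa only [div_eq_inv_mul] using tendsto_nat_floor_mul_div_atTop (f0 x)
  refine le_of_tendsto ((lim s f0 hα).mul (lim t g0 hβ)) ?_
  filter_upwards [Filter.eventually_gt_atTop 0] with R hR
  refine brunn_minkowski_of_counts hα hβ hγ hδ hmix hT hm s t _ _ (inv_pos.2 hR) h0 k0 hH hK ?_
  intro x y
  have fl : ∀ {c : ℝ}, 0 ≤ c → R⁻¹ * (⌊c * R⌋₊ : ℝ) ≤ c := fun {c} hc ↦ by
    rw [inv_mul_le_iff₀ hR, mul_comm R]
    exact Nat.floor_le (mul_nonneg hc hR.le)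
  refine le_trans ?_ (hyp x y)
  gcongr
  · exact Real.rpow_nonneg (f0 x) _
  · exact fl (f0 x)
  · exact fl (g0 y)

/-- The weighted discrete Brunn–Minkowski inequality on a linearly ordered abelian group. -/
theorem brunn_minkowski_of_monotone (hα : 0 < α) (hβ : 0 < β) (hγ : 0 < γ) (hδ : 0 < δ)
    (hmix : max α β ≤ min γ δ) (hT : TranslationEquivariant T)
    (hm : ∀ ⦃x x' y y'⦄, x ≤ x' → y ≤ y' → T x y ≤ T x' y') (f g h k : G → ℝ≥0∞)
    (hyp : ∀ x y, f x ^ α * g y ^ β ≤ h (T x y) ^ γ * k (x + y - T x y) ^ δ) :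
    (∑' x, f x) ^ α * (∑' x, g x) ^ β ≤ (∑' x, h x) ^ γ * (∑' x, k x) ^ δ := by
  by_cases hf : ∀ x, f x = 0
  · simp [hf, ENNReal.zero_rpow_of_pos hα]
  by_cases hg : ∀ x, g x = 0
  · simp [hg, ENNReal.zero_rpow_of_pos hβ]
  push Not at hf hg
  obtain ⟨x₀, hx₀⟩ := hf
  obtain ⟨y₀, hy₀⟩ := hg
  have rpow_ne : ∀ {c : ℝ≥0∞} {r : ℝ}, 0 < r → c ≠ 0 → c ^ r ≠ 0 := fun hr hc h ↦
    hc ((ENNReal.rpow_eq_zero_iff_of_pos hr).1 h)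
  have hne : h (T x₀ y₀) ^ γ * k (x₀ + y₀ - T x₀ y₀) ^ δ ≠ 0 := fun h ↦
    mul_ne_zero (rpow_ne hα hx₀) (rpow_ne hβ hy₀) (le_antisymm (h ▸ hyp x₀ y₀) bot_le)
  have hH0 : ∑' x, h x ≠ 0 := fun h' ↦ hne (by
    rw [ENNReal.tsum_eq_zero.1 h', ENNReal.zero_rpow_of_pos hγ, zero_mul])
  have hK0 : ∑' x, k x ≠ 0 := fun h' ↦ hne (by
    rw [ENNReal.tsum_eq_zero.1 h', ENNReal.zero_rpow_of_pos hδ, mul_zero])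
  by_cases hH : ∑' x, h x = ∞
  · rw [hH, ENNReal.top_rpow_of_pos hγ, ENNReal.top_mul (rpow_ne hδ hK0)]
    exact le_top
  by_cases hK : ∑' x, k x = ∞
  · rw [hK, ENNReal.top_rpow_of_pos hδ, ENNReal.mul_top (rpow_ne hγ hH0)]
    exact le_top
  have hfin := ENNReal.ne_top_of_tsum_ne_top hH
  have kfin := ENNReal.ne_top_of_tsum_ne_top hK
  have Rfin : ∀ x y, f x ^ α * g y ^ β ≠ ∞ := fun x y ↦ ne_top_of_le_ne_top
    (ENNReal.mul_ne_top (ENNReal.rpow_ne_top_of_nonneg hγ.le (hfin _))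
      (ENNReal.rpow_ne_top_of_nonneg hδ.le (kfin _))) (hyp x y)
  have ffin : ∀ x, f x ≠ ∞ := fun x h ↦ Rfin x y₀ (by
    rw [h, ENNReal.top_rpow_of_pos hα, ENNReal.top_mul (rpow_ne hβ hy₀)])
  have gfin : ∀ x, g x ≠ ∞ := fun x h ↦ Rfin x₀ x (by
    rw [h, ENNReal.top_rpow_of_pos hβ, ENNReal.mul_top (rpow_ne hα hx₀)])
  lift f to G → ℝ≥0 using ffin
  lift g to G → ℝ≥0 using gfin
  lift h to G → ℝ≥0 using hfin
  lift k to G → ℝ≥0 using kfin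
  have hle : ∀ {h : G → ℝ≥0}, ∑' x, (h x : ℝ≥0∞) ≠ ∞ → ∀ s : Finset G,
      ∑ x ∈ s, (h x : ℝ) ≤ ((∑' x, h x : ℝ≥0) : ℝ) := fun {h} hh s ↦ by
    exact_mod_cast (ENNReal.tsum_coe_ne_top_iff_summable.1 hh).sum_le_tsum s fun _ _ ↦ bot_le
  have fin : ∀ s t : Finset G, (∑ x ∈ s, (f x : ℝ≥0∞)) ^ α * (∑ x ∈ t, (g x : ℝ≥0∞)) ^ β ≤
      (∑' x, (h x : ℝ≥0∞)) ^ γ * (∑' x, (k x : ℝ≥0∞)) ^ δ := by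
    intro s t
    have key := brunn_minkowski_finset hα hβ hγ hδ hmix hT hm s t
      (f := fun x ↦ (f x : ℝ)) (g := fun x ↦ (g x : ℝ)) (h := fun x ↦ (h x : ℝ))
      (k := fun x ↦ (k x : ℝ)) (fun _ ↦ NNReal.coe_nonneg _) (fun _ ↦ NNReal.coe_nonneg _)
      (fun _ ↦ NNReal.coe_nonneg _) (fun _ ↦ NNReal.coe_nonneg _) (hle hH) (hle hK) fun x y ↦ by
        have := hyp x y
        simp only [← ENNReal.coe_rpow_of_nonneg _ hα.le, ← ENNReal.coe_rpow_of_nonneg _ hβ.le,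
          ← ENNReal.coe_rpow_of_nonneg _ hγ.le, ← ENNReal.coe_rpow_of_nonneg _ hδ.le] at this
        exact_mod_cast this
    rw [← ENNReal.coe_tsum (ENNReal.tsum_coe_ne_top_iff_summable.1 hH),
      ← ENNReal.coe_tsum (ENNReal.tsum_coe_ne_top_iff_summable.1 hK),
      ← ENNReal.ofNNReal_finsetSum, ← ENNReal.ofNNReal_finsetSum]
    simp only [← ENNReal.coe_rpow_of_nonneg _ hα.le, ← ENNReal.coe_rpow_of_nonneg _ hβ.le,
      ← ENNReal.coe_rpow_of_nonneg _ hγ.le, ← ENNReal.coe_rpow_of_nonneg _ hδ.le]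
    exact_mod_cast key
  have sup : ∀ {r : ℝ} (hr : 0 < r) (f : G → ℝ≥0∞),
      (∑' x, f x) ^ r = ⨆ s : Finset G, (∑ x ∈ s, f x) ^ r := fun hr f ↦ by
    rw [ENNReal.tsum_eq_iSup_sum]
    exact (ENNReal.orderIsoRpow _ hr).map_iSup _
  rw [sup hα, sup hβ, ENNReal.iSup_mul]
  refine iSup_le fun s ↦ ?_
  rw [ENNReal.mul_iSup]
  exact iSup_le fun t ↦ fin s t

end OrderedGroup

/-- The inequality for one block, with the ordering given as a relation. -/
lemma TotalAdditiveOrdering.brunn_minkowski {G : Type*} [AddCommGroup G] {r : G → G → Prop}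
    (hr : TotalAdditiveOrdering r) {α β γ δ : ℝ}
    (hα : 0 < α) (hβ : 0 < β) (hγ : 0 < γ) (hδ : 0 < δ) (hmix : max α β ≤ min γ δ)
    {T : G → G → G} (hT : TranslationEquivariant T)
    (hm : ∀ x x' y y', r x x' → r y y' → r (T x y) (T x' y')) (f g h k : G → ℝ≥0∞)
    (hyp : ∀ x y, f x ^ α * g y ^ β ≤ h (T x y) ^ γ * k (x + y - T x y) ^ δ) :
    (∑' x, f x) ^ α * (∑' x, g x) ^ β ≤ (∑' x, h x) ^ γ * (∑' x, k x) ^ δ := by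
  classical
  let _ : LinearOrder G :=
    { le := r
      le_refl := hr.1
      le_antisymm := fun _ _ ↦ hr.2.1 _ _
      le_trans := fun _ _ _ ↦ hr.2.2.1 _ _ _
      le_total := hr.2.2.2.1
      toDecidableLE := Classical.decRel _ }
  have : IsOrderedAddMonoid G :=
    { add_le_add_left := fun a b hab c ↦ hr.2.2.2.2 a b c hab }
  exact brunn_minkowski_of_monotone hα hβ hγ hδ hmix hT (fun x x' y y' ↦ hm x x' y y') f g h k hyp

/-- The inequality for triangular monotone operations on a finite product of ordered groups. -/
theorem brunn_minkowski_pi {α β γ δ : ℝ}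
    (hα : 0 < α) (hβ : 0 < β) (hγ : 0 < γ) (hδ : 0 < δ) (hmix : max α β ≤ min γ δ) {m : ℕ} :
    ∀ {A : Fin m → Type} [∀ i, AddCommGroup (A i)] {ord : ∀ i, A i → A i → Prop},
    (∀ i, TotalAdditiveOrdering (ord i)) → ∀ {T : (∀ i, A i) → (∀ i, A i) → ∀ i, A i},
    TranslationEquivariant T →
    (∀ i x y x' y', (∀ j ≤ i, x j = x' j ∧ y j = y' j) → T x y i = T x' y' i) →
    (∀ i x y x' y', (∀ j < i, x j = x' j ∧ y j = y' j) → ord i (x i) (x' i) →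
      ord i (y i) (y' i) → ord i (T x y i) (T x' y' i)) →
    ∀ f g h k : (∀ i, A i) → ℝ≥0∞,
    (∀ x y, f x ^ α * g y ^ β ≤ h (T x y) ^ γ * k (x + y - T x y) ^ δ) →
    (∑' x, f x) ^ α * (∑' x, g x) ^ β ≤ (∑' x, h x) ^ γ * (∑' x, k x) ^ δ := by
  induction m with
  | zero =>
    intro A _ ord _ T _ _ _ f g h k hyp
    have hs : ∀ f : (∀ i, A i) → ℝ≥0∞, ∑' x, f x = f default := fun f ↦ by simp [tsum_fintype]
    rw [hs, hs, hs, hs]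
    convert hyp default default
  | succ m ih =>
    intro A _ ord hord T hT htri hmon f g h k hyp
    have hs : ∀ f : (∀ i, A i) → ℝ≥0∞,
        ∑' x, f x = ∑' x₀ : A 0, ∑' x' : ∀ i : Fin m, A i.succ, f (Fin.cons x₀ x') := fun f ↦ by
      rw [← ENNReal.tsum_prod, ← (Fin.consEquiv A).tsum_eq]
      rfl
    have hcons : ∀ (x₀ z₀ : A 0) (x z : ∀ i : Fin m, A i.succ),
        (Fin.cons x₀ x + Fin.cons z₀ z : ∀ i, A i) = Fin.cons (x₀ + z₀) (x + z) := by
      intro x₀ z₀ x z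
      funext i
      refine Fin.cases ?_ (fun i ↦ ?_) i <;> simp
    let T₀ : A 0 → A 0 → A 0 := fun x₀ y₀ ↦ T (Fin.cons x₀ 0) (Fin.cons y₀ 0) 0
    have hT₀ : ∀ x₀ y₀ x y, T (Fin.cons x₀ x) (Fin.cons y₀ y) 0 = T₀ x₀ y₀ := by
      intro x₀ y₀ x y
      refine htri 0 _ _ _ _ fun j hj ↦ ?_
      obtain rfl : j = 0 := Fin.le_zero_iff.1 hj
      simp
    rw [hs f, hs g, hs h, hs k]
    refine (hord 0).brunn_minkowski hα hβ hγ hδ hmix (T := T₀) ?_ ?_ _ _ _ _ ?_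
    · intro x₀ y₀ z₀
      have := congrFun (hT (Fin.cons x₀ 0) (Fin.cons y₀ 0) (Fin.cons z₀ 0)) 0
      rw [hcons, hcons, hT₀, Pi.add_apply, hT₀] at this
      simpa using this
    · intro x x' y y' hx hy
      exact hmon 0 _ _ _ _ (fun j hj ↦ absurd hj (Fin.not_lt_zero j)) (by simpa) (by simpa)
    · intro x₀ y₀
      refine ih (A := fun i ↦ A i.succ) (ord := fun i ↦ ord i.succ) (fun i ↦ hord i.succ)
        (T := fun x y ↦ Fin.tail (T (Fin.cons x₀ x) (Fin.cons y₀ y))) ?_ ?_ ?_ _ _ _ _ ?_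
      · intro x y z
        have := congrArg Fin.tail (hT (Fin.cons x₀ x) (Fin.cons y₀ y) (Fin.cons 0 z))
        rw [hcons, hcons, add_zero, add_zero] at this
        refine this.trans ?_
        funext i
        simp [Fin.tail]
      · intro i x y x' y' hxy
        refine htri i.succ _ _ _ _ fun j ↦ ?_
        refine Fin.cases (by simp) (fun j hj ↦ ?_) j
        simpa using hxy j (Fin.succ_le_succ_iff.1 hj)
      · intro i x y x' y' hxy hx hy
        refine hmon i.succ _ _ _ _ (fun j ↦ ?_) (by simpa) (by simpa)
        refine Fin.cases (by simp) (fun j hj ↦ ?_) j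
        simpa using hxy j (Fin.succ_lt_succ_iff.1 hj)
      · intro x y
        convert hyp (Fin.cons x₀ x) (Fin.cons y₀ y) using 4
        · rw [← hT₀ x₀ y₀ x y]
          exact Fin.cons_self_tail _
        · funext i
          refine Fin.cases ?_ (fun i ↦ ?_) i
          · simp [hT₀]
          · simp [Fin.tail]

/-- **Weighted discrete Brunn–Minkowski inequality** for translation equivariant operations
that are monotone in the sense of Knothe. -/
theorem weighted_discrete_brunn_minkowski {n : ℕ} (hn : 1 ≤ n) (α β γ δ : ℝ)
    (hα : 0 < α) (hβ : 0 < β) (hγ : 0 < γ) (hδ : 0 < δ)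
    (hmix : max α β ≤ min γ δ)
    (T : (Fin n → ℤ) → (Fin n → ℤ) → (Fin n → ℤ))
    (hTE : TranslationEquivariant T) (hT : KnotheMonotone T)
    (f g h k : (Fin n → ℤ) → ℝ≥0)
    (hyp : ∀ x y, f x ^ α * g y ^ β ≤ h (T x y) ^ γ * k (x + y - T x y) ^ δ) :
    (∑' x, (f x : ℝ≥0∞)) ^ α * (∑' x, (g x : ℝ≥0∞)) ^ β ≤
      (∑' x, (h x : ℝ≥0∞)) ^ γ * (∑' x, (k x : ℝ≥0∞)) ^ δ := by
  obtain ⟨m, -, ℓ, -, e, ord, hord, htri, hmon⟩ := hT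
  have hs : ∀ f : (Fin n → ℤ) → ℝ≥0, ∑' x, (f x : ℝ≥0∞) = ∑' x, (f (e.symm x) : ℝ≥0∞) :=
    fun f ↦ (e.symm.toEquiv.tsum_eq fun x ↦ (f x : ℝ≥0∞)).symm
  rw [hs f, hs g, hs h, hs k]
  refine brunn_minkowski_pi hα hβ hγ hδ hmix (fun i ↦ (hord i).1)
    (T := fun x y ↦ e (T (e.symm x) (e.symm y))) ?_ ?_ ?_ _ _ _ _ ?_
  · intro x y z
    simp only [map_add, hTE _ _ (e.symm z), AddEquiv.apply_symm_apply]
  · intro i x y x' y' hxy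
    exact htri i _ _ _ _ (by simpa using hxy)
  · intro i x y x' y' hxy hx hy
    exact hmon i _ _ _ _ (by simpa using hxy) (by simpa using hx) (by simpa using hy)
  · intro x y
    have := hyp (e.symm x) (e.symm y)
    simp only [map_add, map_sub, AddEquiv.symm_apply_apply, ← ENNReal.coe_rpow_of_nonneg _ hα.le,
      ← ENNReal.coe_rpow_of_nonneg _ hβ.le, ← ENNReal.coe_rpow_of_nonneg _ hγ.le,
      ← ENNReal.coe_rpow_of_nonneg _ hδ.le]
    exact_mod_cast this
end

section
/- Let α, β, γ, δ > 0 with max{α,β} ≤ min{γ,δ}, and let n ≥ 1. Suppose f, g, h, k : ℤⁿ → [0,∞) satisfy f(x)^α · g(y)^β ≤ h(⌊(x+y)/2⌋)^γ · k(⌈(x+y)/2⌉)^δ for all x, y ∈ ℤⁿ, where ⌊·⌋ and ⌈·⌉ are applied coordinatewise. Then (∑_{x∈ℤⁿ} f(x))^α · (∑_{x∈ℤⁿ} g(x))^β ≤ (∑_{x∈ℤⁿ} h(x))^γ · (∑_{x∈ℤⁿ} k(x))^δ, where the sums are taken in the extended nonnegative reals [0,∞]. -/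
open scoped BigOperators ENNReal NNReal

/-- A four-function inequality for two blocks, when the ratio `f₀ / F` dominates `g₀ / G`. -/
theorem mul_add_le_real {f₀ g₀ h₀ k₀ F G H K : ℝ} (hf : 0 ≤ f₀) (hg : 0 ≤ g₀) (hh : 0 ≤ h₀)
    (hk : 0 ≤ k₀) (hF : 0 ≤ F) (hG : 0 ≤ G) (hH : 0 ≤ H) (hK : 0 ≤ K)
    (h1 : f₀ * g₀ ≤ h₀ * k₀) (h2 : F * G ≤ H * K)
    (h3 : (f₀ + F) * G ≤ (h₀ + H) * K) (hle : g₀ * F ≤ f₀ * G) :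
    (f₀ + F) * (g₀ + G) ≤ (h₀ + H) * (k₀ + K) := by
  rcases hf.eq_or_lt with rfl | hf
  · have : g₀ * F = 0 := le_antisymm (by linarith) (by positivity)
    nlinarith [mul_nonneg hh hk, mul_nonneg hh hK, mul_nonneg hH hk]
  rcases (add_nonneg hg hG).eq_or_lt with h0 | hpos
  · rw [← h0]; nlinarith [mul_nonneg hh hk, mul_nonneg hh hK, mul_nonneg hH hk, mul_nonneg hH hK]
  obtain ⟨c, hc⟩ : ∃ c, c * (f₀ * (g₀ + G)) = f₀ * G - g₀ * F :=
    ⟨(f₀ * G - g₀ * F) / (f₀ * (g₀ + G)), by field_simp⟩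
  have hfg : 0 < f₀ * (g₀ + G) := by positivity
  have hc0 : 0 ≤ c := by
    by_contra! h; nlinarith
  have hc1 : c ≤ 1 := by
    by_contra! h; nlinarith [mul_nonneg hf.le hg, mul_nonneg hg hF]
  obtain ⟨θ, hθ⟩ : ∃ θ, θ * (g₀ + G) = G := ⟨G / (g₀ + G), by field_simp⟩
  have hθ0 : 0 ≤ θ := by
    by_contra! h; nlinarith
  have hθ1 : θ ≤ 1 := by
    by_contra! h; nlinarith
  have e1 : c * f₀ + F = θ * (f₀ + F) := by
    apply mul_right_cancel₀ hpos.ne'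
    linear_combination hc - (f₀ + F) * hθ
  have e2 : (1 - c) * f₀ = (1 - θ) * (f₀ + F) := by linarith
  have e3 : g₀ = (1 - θ) * (g₀ + G) := by linarith
  set T := (f₀ + F) * (g₀ + G) with hT
  have hT0 : 0 ≤ T := by positivity
  have a1 : (1 - θ) ^ 2 * T ≤ ((1 - c) * h₀) * k₀ := by
    calc (1 - θ) ^ 2 * T = ((1 - θ) * (f₀ + F)) * ((1 - θ) * (g₀ + G)) := by rw [hT]; ring
      _ = (1 - c) * (f₀ * g₀) := by rw [← e2, ← e3]; ring
      _ ≤ (1 - c) * (h₀ * k₀) := by gcongr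
      _ = _ := by ring
  have a2 : θ ^ 2 * T ≤ (c * h₀ + H) * K := by
    calc θ ^ 2 * T = (θ * (f₀ + F)) * (θ * (g₀ + G)) := by rw [hT]; ring
      _ = (1 - c) * (F * G) + c * ((f₀ + F) * G) := by rw [← e1, hθ]; ring
      _ ≤ (1 - c) * (H * K) + c * ((h₀ + H) * K) := by gcongr
      _ = _ := by ring
  have hA : 0 ≤ (1 - c) * h₀ := mul_nonneg (by linarith) hh
  have hP : 0 ≤ c * h₀ + H := by positivity
  have e4 : (h₀ + H) * (k₀ + K) = ((1 - c) * h₀ + (c * h₀ + H)) * (k₀ + K) := by ring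
  rw [e4]
  generalize (1 - c) * h₀ = A at *
  generalize c * h₀ + H = P at *
  have a3 : 2 * (θ * (1 - θ) * T) ≤ A * K + P * k₀ := by
    apply le_of_sq_le_sq _ (by positivity)
    have : (θ ^ 2 * T) * ((1 - θ) ^ 2 * T) ≤ (P * K) * (A * k₀) := by gcongr
    nlinarith [sq_nonneg (A * K - P * k₀)]
  nlinarith

/-- A four-function inequality for two blocks: it follows from its versions in which the leading
terms of `f` and `k`, of `g` and `k`, or of all four functions are removed. -/
theorem mul_add_le_ennreal {f₀ g₀ h₀ k₀ F G H K : ℝ≥0∞}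
    (h1 : f₀ * g₀ ≤ h₀ * k₀) (h2 : F * G ≤ H * K)
    (h3 : (f₀ + F) * G ≤ (h₀ + H) * K) (h4 : F * (g₀ + G) ≤ (h₀ + H) * K) :
    (f₀ + F) * (g₀ + G) ≤ (h₀ + H) * (k₀ + K) := by
  have hexp : (f₀ + F) * (g₀ + G) = f₀ * g₀ + (f₀ + F) * G + F * g₀ := by ring
  have h5 : F * g₀ ≤ (h₀ + H) * K := le_trans (by gcongr; exact le_self_add) h4
  have h6 : f₀ * g₀ + (f₀ + F) * G + F * g₀ ≤ h₀ * k₀ + (h₀ + H) * K + (h₀ + H) * K := by gcongr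
  by_cases hfin : h₀ * k₀ + (h₀ + H) * K + (h₀ + H) * K = ∞ ∨ (h₀ + H) * (k₀ + K) = ∞
  · have : (h₀ + H) * (k₀ + K) = ∞ := by
      rcases hfin with h | h
      · by_contra hne
        refine absurd h ?_
        have b1 : h₀ * k₀ ≤ (h₀ + H) * (k₀ + K) := by gcongr <;> exact le_self_add
        have b2 : (h₀ + H) * K ≤ (h₀ + H) * (k₀ + K) := by gcongr; exact le_add_self
        have := ne_top_of_le_ne_top hne b1
        have := ne_top_of_le_ne_top hne b2
        finiteness
      · exact h
    simp [this]
  push Not at hfin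
  have hL : (f₀ + F) * (g₀ + G) ≠ ∞ := by rw [hexp]; exact ne_top_of_le_ne_top hfin.1 h6
  by_cases hf : f₀ + F = 0
  · simp [hf]
  by_cases hg : g₀ + G = 0
  · simp [hg]
  by_cases hh : h₀ + H = 0
  · rw [hexp]; refine h6.trans ?_
    simp at hh; simp [hh]
  by_cases hk : k₀ + K = 0
  · rw [hexp]; refine h6.trans ?_
    simp at hk; simp [hk]
  have t1 : f₀ + F ≠ ∞ := fun h => hL (by rw [h, ENNReal.top_mul hg])
  have t2 : g₀ + G ≠ ∞ := fun h => hL (by rw [h, ENNReal.mul_top hf])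
  have t3 : h₀ + H ≠ ∞ := fun h => hfin.2 (by rw [h, ENNReal.top_mul hk])
  have t4 : k₀ + K ≠ ∞ := fun h => hfin.2 (by rw [h, ENNReal.mul_top hh])
  rw [ENNReal.add_ne_top] at t1 t2 t3 t4
  obtain ⟨t1, t1'⟩ := t1
  obtain ⟨t2, t2'⟩ := t2
  obtain ⟨t3, t3'⟩ := t3
  obtain ⟨t4, t4'⟩ := t4
  clear hexp h5 h6 hfin hL hf hg hh hk
  lift f₀ to ℝ≥0 using t1
  lift g₀ to ℝ≥0 using t2
  lift h₀ to ℝ≥0 using t3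
  lift k₀ to ℝ≥0 using t4
  lift F to ℝ≥0 using t1'
  lift G to ℝ≥0 using t2'
  lift H to ℝ≥0 using t3'
  lift K to ℝ≥0 using t4'
  norm_cast at h1 h2 h3 h4 ⊢
  rw [← NNReal.coe_le_coe] at h1 h2 h3 h4 ⊢
  push_cast at *
  rcases le_total ((g₀ : ℝ) * F) (f₀ * G) with h | h
  · exact mul_add_le_real f₀.2 g₀.2 h₀.2 k₀.2 F.2 G.2 H.2 K.2 h1 h2 h3 h
  · rw [mul_comm]
    exact mul_add_le_real g₀.2 f₀.2 h₀.2 k₀.2 G.2 F.2 H.2 K.2 (by linarith) (by linarith)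
      (by linarith) h

/-- The Klartag–Lehec inequality on `ℕ`, with finite sums on the left. -/
theorem sum_range_mul_sum_range_le (N M : ℕ) (f g h k : ℕ → ℝ≥0∞)
    (hyp : ∀ i j, f i * g j ≤ h ((i + j) / 2) * k ((i + j + 1) / 2)) :
    (∑ i ∈ Finset.range N, f i) * (∑ j ∈ Finset.range M, g j) ≤ (∑' z, h z) * ∑' z, k z := by
  induction hs : N + M using Nat.strong_induction_on generalizing N M f g h k with
  | _ s ih =>
  subst hs
  rcases N with _ | N
  · simp
  rcases M with _ | M
  · simp
  have eh := tsum_eq_zero_add' (f := h) ENNReal.summable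
  have ek := tsum_eq_zero_add' (f := k) ENNReal.summable
  rw [Finset.sum_range_succ', Finset.sum_range_succ', add_comm _ (f 0), add_comm _ (g 0), eh, ek]
  apply mul_add_le_ennreal
  · simpa using hyp 0 0
  · refine ih (N + M) (by omega) N M _ _ _ _ (fun i j => ?_) rfl
    convert hyp (i + 1) (j + 1) using 3 <;> omega
  · rw [← eh, mul_comm (∑' z, h z), add_comm (f 0), ← Finset.sum_range_succ']
    refine ih (N + 1 + M) (by omega) (N + 1) M _ _ _ _ (fun i j => ?_) rfl
    rw [mul_comm (k _)]
    convert hyp i (j + 1) using 3 <;> omega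
  · rw [← eh, mul_comm (∑' z, h z), add_comm (g 0), ← Finset.sum_range_succ' g]
    refine ih (N + (M + 1)) (by omega) N (M + 1) _ _ _ _ (fun i j => ?_) rfl
    rw [mul_comm (k _)]
    convert hyp (i + 1) j using 3 <;> omega

/-- The Klartag–Lehec inequality on `ℤ`. -/
theorem tsum_int_mul_tsum_int_le (f g h k : ℤ → ℝ≥0∞)
    (hyp : ∀ x y, f x * g y ≤ h ((x + y) / 2) * k ((x + y + 1) / 2)) :
    (∑' x, f x) * (∑' x, g x) ≤ (∑' x, h x) * ∑' x, k x := by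
  rw [ENNReal.tsum_eq_iSup_sum, ENNReal.tsum_eq_iSup_sum]
  rw [ENNReal.iSup_mul]
  refine iSup_le fun s => ?_
  rw [ENNReal.mul_iSup]
  refine iSup_le fun t => ?_
  obtain ⟨N, hN⟩ : ∃ N : ℕ, ∀ x ∈ s ∪ t, x.natAbs < N :=
    ⟨(s ∪ t).sup Int.natAbs + 1, fun x hx => Nat.lt_succ_of_le (Finset.le_sup hx)⟩
  have hinj : Function.Injective fun i : ℕ => (i : ℤ) - N := fun a b hab => by
    simpa using hab
  have key : ∀ (u : Finset ℤ), u ⊆ s ∪ t → ∀ φ : ℤ → ℝ≥0∞,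
      ∑ x ∈ u, φ x ≤ ∑ i ∈ Finset.range (2 * N), φ ((i : ℤ) - N) := by
    intro u hu φ
    rw [← Finset.sum_image (f := φ) (g := fun i : ℕ => (i : ℤ) - N) hinj.injOn]
    refine Finset.sum_le_sum_of_subset fun x hx => ?_
    have := hN x (hu hx)
    exact Finset.mem_image.2 ⟨(x + N).toNat, Finset.mem_range.2 (by omega), by omega⟩
  calc _ ≤ _ := mul_le_mul' (key s Finset.subset_union_left f) (key t Finset.subset_union_right g)
    _ ≤ (∑' z : ℕ, h (z - N)) * ∑' z : ℕ, k (z - N) := by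
      refine sum_range_mul_sum_range_le _ _ _ _ _ _ fun i j => ?_
      convert hyp (i - N) (j - N) using 3 <;> omega
    _ ≤ _ := mul_le_mul' (ENNReal.tsum_comp_le_tsum_of_injective hinj h)
      (ENNReal.tsum_comp_le_tsum_of_injective hinj k)

/-- The Klartag–Lehec inequality on `ℤⁿ`. -/
theorem tsum_pi_int_mul_tsum_pi_int_le (n : ℕ) (f g h k : (Fin n → ℤ) → ℝ≥0∞)
    (hyp : ∀ x y, f x * g y ≤
      h (fun i => (x i + y i) / 2) * k (fun i => (x i + y i + 1) / 2)) :
    (∑' x, f x) * (∑' x, g x) ≤ (∑' x, h x) * ∑' x, k x := by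
  induction n with
  | zero =>
    simp only [tsum_fintype, Fintype.sum_unique]
    convert hyp default default
  | succ n ih =>
    have key (φ : (Fin (n + 1) → ℤ) → ℝ≥0∞) :
        ∑' x, φ x = ∑' (s : ℤ) (x : Fin n → ℤ), φ (Fin.cons s x) := by
      rw [← (Fin.consEquiv fun _ => ℤ).tsum_eq, ENNReal.tsum_prod']
      rfl
    simp only [key]
    refine tsum_int_mul_tsum_int_le _ _ _ _ fun s t => ih _ _ _ _ fun x y => ?_
    convert hyp (Fin.cons s x) (Fin.cons t y) using 3 <;>
    · ext i; refine Fin.cases ?_ (fun i => ?_) i <;> simp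

theorem tsum_rpow_le_tsum_rpow {ι : Type*} (f : ι → ℝ≥0∞) {p : ℝ} (hp : 0 < p) (hp1 : p ≤ 1) :
    (∑' i, f i) ^ p ≤ ∑' i, f i ^ p := by
  classical
  rw [← ENNReal.le_rpow_inv_iff hp, ENNReal.tsum_eq_iSup_sum]
  refine iSup_le fun s => ?_
  rw [ENNReal.le_rpow_inv_iff hp]
  refine le_trans ?_ (ENNReal.sum_le_tsum s)
  exact Finset.le_sum_of_subadditive (fun x : ℝ≥0∞ => x ^ p) (by simp [hp])
    (fun a b => ENNReal.rpow_add_le_add_rpow a b hp.le hp1) s f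

theorem tsum_rpow_le_rpow_tsum {ι : Type*} (f : ι → ℝ≥0∞) {p : ℝ} (hp1 : 1 ≤ p) :
    ∑' i, f i ^ p ≤ (∑' i, f i) ^ p := by
  have hp : 0 < p := by linarith
  have := tsum_rpow_le_tsum_rpow (fun i => f i ^ p) (inv_pos.2 hp) (inv_le_one_of_one_le₀ hp1)
  rw [ENNReal.rpow_inv_le_iff hp] at this
  simpa [← ENNReal.rpow_mul, hp.ne'] using this

/-- **Weighted discrete Brunn–Minkowski inequality of Klartag–Lehec type** on `ℤⁿ`, with
the operations `T₋(x,y) = ⌊(x+y)/2⌋` and `T₊(x,y) = ⌈(x+y)/2⌉` taken coordinatewise. -/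
theorem weighted_klartag_lehec {n : ℕ} (hn : 1 ≤ n) (α β γ δ : ℝ)
    (hα : 0 < α) (hβ : 0 < β) (hγ : 0 < γ) (hδ : 0 < δ)
    (hmix : max α β ≤ min γ δ)
    (f g h k : (Fin n → ℤ) → ℝ≥0)
    (hyp : ∀ x y : Fin n → ℤ,
      f x ^ α * g y ^ β ≤
        h (fun i => ⌊((x i + y i : ℤ) : ℚ) / 2⌋) ^ γ *
          k (fun i => ⌈((x i + y i : ℤ) : ℚ) / 2⌉) ^ δ) :
    (∑' x, (f x : ℝ≥0∞)) ^ α * (∑' x, (g x : ℝ≥0∞)) ^ β ≤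
      (∑' x, (h x : ℝ≥0∞)) ^ γ * (∑' x, (k x : ℝ≥0∞)) ^ δ := by
  have hfloor (a : ℤ) : ⌊(a : ℚ) / 2⌋ = a / 2 := by
    simpa using Rat.floor_intCast_div_natCast a 2
  have hceil (a : ℤ) : ⌈(a : ℚ) / 2⌉ = (a + 1) / 2 := by
    have : ⌈(a : ℚ) / 2⌉ = -(-a / 2) := by simpa using Rat.ceil_intCast_div_natCast a 2
    omega
  simp only [hfloor, hceil] at hyp
  set m := max α β
  have hm : 0 < m := lt_max_of_lt_left hα
  have hγm : m ≤ γ := hmix.trans (min_le_left _ _)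
  have hδm : m ≤ δ := hmix.trans (min_le_right _ _)
  have hdiv (S : ℝ≥0∞) (p : ℝ) : S ^ p = (S ^ (p / m)) ^ m := by
    rw [← ENNReal.rpow_mul, div_mul_cancel₀ _ hm.ne']
  rw [hdiv _ α, hdiv _ β, hdiv _ γ, hdiv _ δ, ← ENNReal.mul_rpow_of_nonneg _ _ hm.le,
    ← ENNReal.mul_rpow_of_nonneg _ _ hm.le]
  refine ENNReal.rpow_le_rpow ?_ hm.le
  calc _ ≤ _ := mul_le_mul'
        (tsum_rpow_le_tsum_rpow _ (div_pos hα hm) ((div_le_one hm).2 (le_max_left _ _)))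
        (tsum_rpow_le_tsum_rpow _ (div_pos hβ hm) ((div_le_one hm).2 (le_max_right _ _)))
    _ ≤ _ := tsum_pi_int_mul_tsum_pi_int_le n _ _ (fun x => (h x : ℝ≥0∞) ^ (γ / m))
        (fun x => (k x : ℝ≥0∞) ^ (δ / m)) fun x y => ?_
    _ ≤ _ := mul_le_mul' (tsum_rpow_le_rpow_tsum _ ((one_le_div hm).2 hγm))
        (tsum_rpow_le_rpow_tsum _ ((one_le_div hm).2 hδm))
  rw [← ENNReal.rpow_le_rpow_iff hm, ENNReal.mul_rpow_of_nonneg _ _ hm.le,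
    ENNReal.mul_rpow_of_nonneg _ _ hm.le, ← hdiv, ← hdiv, ← hdiv, ← hdiv,
    ← ENNReal.coe_rpow_of_nonneg _ hα.le, ← ENNReal.coe_rpow_of_nonneg _ hβ.le,
    ← ENNReal.coe_rpow_of_nonneg _ hγ.le, ← ENNReal.coe_rpow_of_nonneg _ hδ.le]
  exact_mod_cast hyp x y
end

section
/- Let α, β, γ, δ > 0 with max{α,β} ≤ min{γ,δ}, and let n ≥ 1. For any finitely supported probability measures μ and ν on ℤⁿ there exists a coupling π of μ and ν such that, with κ₋ the push-forward of π by T₋(x,y) = ⌊(x+y)/2⌋ and κ₊ the push-forward of π by T₊(x,y) = ⌈(x+y)/2⌉ (floor and ceiling applied coordinatewise), one has α·H(μ|mₙ) + β·H(ν|mₙ) ≥ γ·H(κ₋|mₙ) + δ·H(κ₊|mₙ). -/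
open scoped BigOperators ENNReal NNReal

/-- A finitely supported probability measure on `A`, viewed as its density. -/
def IsPMF {A : Type*} (μ : A → ℝ) : Prop :=
  (∀ x, 0 ≤ μ x) ∧ (Function.support μ).Finite ∧ ∑ᶠ x, μ x = 1

/-- Relative entropy `H(μ | m)` of a finitely supported probability measure with respect to
the counting measure `m`: `∑ₓ μ(x) log μ(x)` (note `Real.log 0 = 0`, so `0 · log 0 = 0`). -/
noncomputable def relEntropy {A : Type*} (μ : A → ℝ) : ℝ :=
  ∑ᶠ x, μ x * Real.log (μ x)

/-- Push-forward `π ∘ T⁻¹` of a (finitely supported) measure `π` by the map `T`. -/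
noncomputable def pushforward {A B : Type*} (T : A → B) (π : A → ℝ) : B → ℝ :=
  fun z => ∑ᶠ p ∈ {p : A | T p = z}, π p

/-- `π` is a coupling of `μ` and `ν`: a probability measure on the product whose first and
second marginals are `μ` and `ν` respectively. -/
def IsCoupling {A B : Type*} (π : A × B → ℝ) (μ : A → ℝ) (ν : B → ℝ) : Prop :=
  IsPMF π ∧ (∀ x, ∑ᶠ y, π (x, y) = μ x) ∧ (∀ y, ∑ᶠ x, π (x, y) = ν y)

/-- The function `t ↦ t log t` on the nonnegative reals. -/
noncomputable def mulLog (t : ℝ≥0) : ℝ := t * Real.log t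

@[simp] lemma mulLog_zero : mulLog 0 = 0 := by simp [mulLog]

lemma mulLog_mul (c t : ℝ≥0) : mulLog (c * t) = c * mulLog t + mulLog c * t := by
  unfold mulLog
  rcases eq_or_ne c 0 with rfl | hc
  · simp
  rcases eq_or_ne t 0 with rfl | ht
  · simp
  push_cast
  rw [Real.log_mul (by simpa using hc) (by simpa using ht)]
  ring

lemma mulLog_add_sub_le {a c : ℝ≥0} (h : a ≤ c) (m : ℝ≥0) :
    mulLog (a + m) - mulLog a ≤ mulLog (c + m) - mulLog c := by
  rcases eq_or_ne m 0 with rfl | hm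
  · simp
  have hm' : (0 : ℝ) < m := by positivity
  have hac : (a : ℝ) ≤ c := by exact_mod_cast h
  have hd : 0 < (c : ℝ) + m - a := by linarith
  have key {x y : ℝ} (hx : 0 ≤ x) (hy : 0 ≤ y) (hxy : x + y = 1) :=
    Real.convexOn_mul_log.2 (x := (a : ℝ)) (y := (c : ℝ) + m) a.2
      (show (0 : ℝ) ≤ c + m by positivity) hx hy hxy
  have h1 := key (x := (c - a) / (c + m - a)) (y := m / (c + m - a))
    (div_nonneg (by linarith) hd.le) (by positivity) (by field_simp; ring)
  have h2 := key (x := m / (c + m - a)) (y := (c - a) / (c + m - a))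
    (by positivity) (div_nonneg (by linarith) hd.le) (by field_simp; ring)
  simp only [smul_eq_mul] at h1 h2
  rw [show (c - a) / (c + m - a) * (a : ℝ) + m / (c + m - a) * (c + m) = a + m by
    field_simp; ring] at h1
  rw [show m / (c + m - a) * (a : ℝ) + (c - a) / (c + m - a) * (c + m) = c by
    field_simp; ring] at h2
  have h3 : m / ((c : ℝ) + m - a) = 1 - (c - a) / (c + m - a) := by field_simp; ring
  rw [h3] at h1 h2
  unfold mulLog
  push_cast
  linarith

lemma mul_log_add_sub_le {a A : ℝ≥0} (h : a ≤ A) {q : ℝ} (hq : 0 < q) :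
    a * Real.log q + a - A * q ≤ a * (Real.log a - Real.log A) := by
  rcases eq_or_ne a 0 with rfl | ha
  · simp; positivity
  have ha' : (0 : ℝ) < a := by positivity
  have hA : (0 : ℝ) < A := ha'.trans_le (by exact_mod_cast h)
  have key := Real.log_le_sub_one_of_pos (show 0 < A * q / a by positivity)
  rw [Real.log_div (by positivity) (by positivity), Real.log_mul hA.ne' hq.ne'] at key
  have := mul_le_mul_of_nonneg_left key ha'.le
  rw [mul_sub, mul_sub _ (_ / _), mul_div_cancel₀ _ ha'.ne'] at this
  linarith

lemma log_sum_add_le {a b A B : ℝ≥0} (ha : a ≤ A) (hb : b ≤ B) :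
    ((a + b : ℝ≥0) : ℝ) * (Real.log (a + b : ℝ≥0) - Real.log (A + B : ℝ≥0)) ≤
      a * (Real.log a - Real.log A) + b * (Real.log b - Real.log B) := by
  rcases eq_or_ne (a + b) 0 with h0 | h0
  · obtain ⟨rfl, rfl⟩ := add_eq_zero.1 h0
    simp
  have h : 0 < a + b := pos_iff_ne_zero.2 h0
  have hAB : 0 < A + B := h.trans_le (add_le_add ha hb)
  have h' : (0 : ℝ) < (a + b : ℝ≥0) := by exact_mod_cast h
  have hAB' : (0 : ℝ) < (A + B : ℝ≥0) := by exact_mod_cast hAB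
  have hq : (0 : ℝ) < (a + b : ℝ≥0) / (A + B : ℝ≥0) := by positivity
  have h1 := mul_log_add_sub_le ha hq
  have h2 := mul_log_add_sub_le hb hq
  have h3 : ((A + B : ℝ≥0) : ℝ) * ((a + b : ℝ≥0) / (A + B : ℝ≥0)) = (a + b : ℝ≥0) :=
    mul_div_cancel₀ _ hAB'.ne'
  rw [← Real.log_div h'.ne' hAB'.ne']
  generalize ((a + b : ℝ≥0) : ℝ) / (A + B : ℝ≥0) = q at *
  push_cast at *
  linarith

/-- The relative entropy of a finitely supported measure with respect to counting measure. -/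
noncomputable def Finsupp.negEntropy {A : Type*} (f : A →₀ ℝ≥0) : ℝ :=
  f.sum fun _ t => mulLog t

open Finsupp

section

variable {A B C : Type*}

lemma Finsupp.negEntropy_eq_sum_of_subset (f : A →₀ ℝ≥0) {s : Finset A} (h : f.support ⊆ s) :
    f.negEntropy = ∑ a ∈ s, mulLog (f a) :=
  Finsupp.sum_of_support_subset f h _ (by simp)

@[simp] lemma Finsupp.negEntropy_zero : (0 : A →₀ ℝ≥0).negEntropy = 0 := by
  simp [negEntropy]

lemma Finsupp.negEntropy_add_single (f : A →₀ ℝ≥0) (a : A) (m : ℝ≥0) :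
    (f + single a m).negEntropy = f.negEntropy + (mulLog (f a + m) - mulLog (f a)) := by
  classical
  unfold negEntropy
  rw [← add_sum_erase' (f + single a m) a _ (by simp), ← add_sum_erase' f a _ (by simp)]
  simp only [coe_add, Pi.add_apply, single_eq_same, erase_add, erase_single, add_zero]
  ring

@[simp] lemma Finsupp.negEntropy_single (a : A) (m : ℝ≥0) :
    (single a m).negEntropy = mulLog m := by
  simpa using negEntropy_add_single 0 a m

lemma Finsupp.negEntropy_mapDomain {e : A → B} (he : Function.Injective e) (f : A →₀ ℝ≥0) :
    (f.mapDomain e).negEntropy = f.negEntropy :=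
  sum_mapDomain_index_inj he

lemma Finsupp.degree_nnreal_smul (c : ℝ≥0) (f : A →₀ ℝ≥0) :
    (c • f).degree = c * f.degree := by
  rcases eq_or_ne c 0 with rfl | hc
  · simp
  · simp [degree_apply, Finsupp.support_smul_eq hc, Finset.mul_sum]

lemma Finsupp.negEntropy_smul (c : ℝ≥0) (f : A →₀ ℝ≥0) :
    (c • f).negEntropy = c * f.negEntropy + mulLog c * f.degree := by
  rw [negEntropy_eq_sum_of_subset _ (support_smul (b := c) (g := f))]
  simp [negEntropy, Finsupp.sum, degree_apply, mulLog_mul, Finset.sum_add_distrib, Finset.mul_sum]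

lemma Finsupp.mapDomain_apply_eq_sum_filter [DecidableEq B] (u : A → B) (f : A →₀ ℝ≥0) (b : B) :
    f.mapDomain u b = ∑ a ∈ f.support with u a = b, f a := by
  simp [mapDomain, Finsupp.sum, single_apply, Finset.sum_ite]

lemma Finsupp.le_mapDomain_apply (u : A → B) (f : A →₀ ℝ≥0) (a : A) :
    f a ≤ f.mapDomain u (u a) := by
  classical
  rw [mapDomain_apply_eq_sum]
  by_cases h : a ∈ f.support
  · exact Finset.single_le_sum (f := f) (fun _ _ => zero_le) (by simpa using h)
  · simp_all

lemma Finsupp.mapDomain_apply_le_mapDomain_apply {u : A → B} {v : A → C} {f : A →₀ ℝ≥0} {b : B}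
    {c : C} (h : ∀ a, f a ≠ 0 → u a = b → v a = c) : f.mapDomain u b ≤ f.mapDomain v c := by
  classical
  rw [mapDomain_apply_eq_sum_filter, mapDomain_apply_eq_sum_filter]
  refine Finset.sum_le_sum_of_subset fun a ha => ?_
  simp_all

/-- The entropy of `f` relative to its push-forward by `u`, in a form showing that it is a sum of
perspectives of a convex function. -/
lemma Finsupp.negEntropy_sub_mapDomain (u : A → B) (f : A →₀ ℝ≥0) {s : Finset A}
    (h : f.support ⊆ s) :
    f.negEntropy - (f.mapDomain u).negEntropy =
      ∑ a ∈ s, (f a : ℝ) * (Real.log (f a) - Real.log (f.mapDomain u (u a))) := by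
  have key : (f.mapDomain u).negEntropy =
      f.sum fun a t => (t : ℝ) * Real.log (f.mapDomain u (u a)) := by
    exact sum_mapDomain_index (h := fun b (t : ℝ≥0) => (t : ℝ) * Real.log (f.mapDomain u b))
      (by simp)
      (fun b x y => by push_cast; ring)
  rw [key, negEntropy_eq_sum_of_subset f h, Finsupp.sum_of_support_subset f h _ (by simp),
    ← Finset.sum_sub_distrib]
  simp only [mulLog, mul_sub]

lemma Finsupp.negEntropy_add_sub_mapDomain_le (u : A → B) (f g : A →₀ ℝ≥0) :
    (f + g).negEntropy - ((f + g).mapDomain u).negEntropy ≤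
      (f.negEntropy - (f.mapDomain u).negEntropy) +
        (g.negEntropy - (g.mapDomain u).negEntropy) := by
  classical
  rw [negEntropy_sub_mapDomain u (f + g) (s := f.support ∪ g.support) support_add,
    negEntropy_sub_mapDomain u f (s := f.support ∪ g.support) Finset.subset_union_left,
    negEntropy_sub_mapDomain u g (s := f.support ∪ g.support) Finset.subset_union_right,
    ← Finset.sum_add_distrib]
  refine Finset.sum_le_sum fun a _ => ?_
  rw [mapDomain_add]
  exact log_sum_add_le (le_mapDomain_apply u f a) (le_mapDomain_apply u g a)

lemma Finsupp.negEntropy_sum_sub_mapDomain_le {ι : Type*} (u : A → B) (s : Finset ι)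
    (f : ι → A →₀ ℝ≥0) :
    (∑ i ∈ s, f i).negEntropy - ((∑ i ∈ s, f i).mapDomain u).negEntropy ≤
      ∑ i ∈ s, ((f i).negEntropy - ((f i).mapDomain u).negEntropy) :=
  Finset.le_sum_of_subadditive
    (fun f : A →₀ ℝ≥0 => f.negEntropy - (f.mapDomain u).negEntropy) (by simp)
    (negEntropy_add_sub_mapDomain_le u) s f

/-- Two maps `s, t : A × A → A` satisfy the midpoint inequality for the entropy if any two finitely
supported measures of the same mass have a coupling whose push-forwards by `s` and `t` have total
relative entropy at most that of the two measures. -/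
def EntropyMidpoint (s t : A × A → A) : Prop :=
  ∀ f g : A →₀ ℝ≥0, f.degree = g.degree → ∃ π : A × A →₀ ℝ≥0,
    π.mapDomain Prod.fst = f ∧ π.mapDomain Prod.snd = g ∧
      (π.mapDomain s).negEntropy + (π.mapDomain t).negEntropy ≤ f.negEntropy + g.negEntropy

lemma EntropyMidpoint.of_unique [Unique A] (s t : A × A → A) : EntropyMidpoint s t := by
  intro f g h
  obtain rfl : f = g := by
    rw [Finsupp.unique_single f, Finsupp.unique_single g] at h ⊢
    simpa using h
  refine ⟨f.mapDomain fun a => (a, a), ?_⟩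
  simp only [← mapDomain_comp, Subsingleton.elim (_ ∘ fun a : A => (a, a)) id, mapDomain_id,
    le_refl, and_self]

lemma EntropyMidpoint.congr (e : A ≃ B) {s t : A × A → A} (h : EntropyMidpoint s t)
    {s' t' : B × B → B} (hs : ∀ p, s' (Prod.map e e p) = e (s p))
    (ht : ∀ p, t' (Prod.map e e p) = e (t p)) : EntropyMidpoint s' t' := by
  intro f g hfg
  obtain ⟨π, h1, h2, h3⟩ := h (f.mapDomain e.symm) (g.mapDomain e.symm)
    (by simpa only [degree_mapDomain] using hfg)
  have aux (f : B →₀ ℝ≥0) : (f.mapDomain e.symm).mapDomain e = f := by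
    rw [← mapDomain_comp]; simp
  refine ⟨π.mapDomain (Prod.map e e), ?_, ?_, ?_⟩
  · rw [← mapDomain_comp, show Prod.fst ∘ Prod.map e e = e ∘ Prod.fst from rfl, mapDomain_comp, h1, aux]
  · rw [← mapDomain_comp, show Prod.snd ∘ Prod.map e e = e ∘ Prod.snd from rfl, mapDomain_comp, h2, aux]
  · rw [← mapDomain_comp, ← mapDomain_comp, show s' ∘ Prod.map e e = e ∘ s from funext hs,
      show t' ∘ Prod.map e e = e ∘ t from funext ht, mapDomain_comp, mapDomain_comp,
      negEntropy_mapDomain e.injective, negEntropy_mapDomain e.injective]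
    rwa [negEntropy_mapDomain e.symm.injective, negEntropy_mapDomain e.symm.injective] at h3

lemma Finsupp.degree_curry_apply (f : A × B →₀ ℝ≥0) (a : A) :
    (f.curry a).degree = f.mapDomain Prod.fst a := by
  classical
  rw [mapDomain_apply_eq_sum_filter]
  refine Finset.sum_nbij' (Prod.mk a) Prod.snd ?_ ?_ ?_ ?_ ?_ <;>
    simp +contextual [eq_comm]

lemma Finsupp.support_mapDomain_fst (f : A × B →₀ ℝ≥0) :
    (f.mapDomain Prod.fst).support = f.curry.support := by
  classical
  rw [mapDomain_support_of_subsingletonAddUnits, support_curry]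

/-- A finitely supported measure on a product, disintegrated over the first factor. -/
lemma Finsupp.exists_disintegration (f : A × B →₀ ℝ≥0) :
    ∃ k : A → B →₀ ℝ≥0, (∀ a, f.mapDomain Prod.fst a ≠ 0 → (k a).degree = 1) ∧
      ((f.mapDomain Prod.fst).sum fun a w => (w • k a).mapDomain (Prod.mk a)) = f ∧
      f.negEntropy = (f.mapDomain Prod.fst).negEntropy +
        (f.mapDomain Prod.fst).sum fun a w => w * (k a).negEntropy := by
  set f₁ := f.mapDomain Prod.fst with hf₁
  have hdeg (a : A) (ha : f₁ a ≠ 0) : ((f₁ a)⁻¹ • f.curry a).degree = 1 := by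
    rw [degree_nnreal_smul, degree_curry_apply, inv_mul_cancel₀ ha]
  have hsmul (a : A) (ha : a ∈ f₁.support) : f.curry a = f₁ a • (f₁ a)⁻¹ • f.curry a := by
    rw [smul_smul, mul_inv_cancel₀ (by simpa using ha), one_smul]
  refine ⟨fun a => (f₁ a)⁻¹ • f.curry a, hdeg, ?_, ?_⟩
  · conv_rhs => rw [← f.sum_single]
    rw [← sum_curry_index f (fun a b w => single (a, b) w), Finsupp.sum, Finsupp.sum,
      hf₁, support_mapDomain_fst, ← hf₁]
    refine Finset.sum_congr rfl fun a ha => ?_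
    rw [← hsmul a (by rwa [hf₁, support_mapDomain_fst])]
    rfl
  · rw [negEntropy, ← sum_curry_index f (fun _ _ w => mulLog w), negEntropy, Finsupp.sum,
      Finsupp.sum, Finsupp.sum, ← support_mapDomain_fst, ← hf₁, ← Finset.sum_add_distrib]
    refine Finset.sum_congr rfl fun a ha => ?_
    rw [hsmul a ha]
    change negEntropy _ = _
    rw [negEntropy_smul, hdeg a (by simpa using ha)]
    simp [add_comm]

lemma Finsupp.negEntropy_sum_mapDomain_mk_le {ι : Type*} (w : ι →₀ ℝ≥0) (c : ι → A)
    (r : ι → B →₀ ℝ≥0) (hr : ∀ i, (r i).degree = w i) :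
    (∑ i ∈ w.support, (r i).mapDomain (Prod.mk (c i))).negEntropy ≤
      (w.mapDomain c).negEntropy + ∑ i ∈ w.support, ((r i).negEntropy - mulLog (w i)) := by
  have hfst (i : ι) : ((r i).mapDomain (Prod.mk (c i))).mapDomain Prod.fst =
      single (c i) (w i) := by
    rw [← mapDomain_comp, ← hr i, degree_apply, single_finsetSum]
    rfl
  have h := negEntropy_sum_sub_mapDomain_le Prod.fst w.support
    fun i => (r i).mapDomain (Prod.mk (c i))
  have hw : (∑ i ∈ w.support, (r i).mapDomain (Prod.mk (c i))).mapDomain Prod.fst =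
      w.mapDomain c := by
    rw [mapDomain_finsetSum, Finset.sum_congr rfl fun i _ => hfst i]
    rfl
  simp only [hw, hfst, negEntropy_mapDomain (Prod.mk_right_injective _), negEntropy_single] at h
  linarith

lemma EntropyMidpoint.prod {s₁ t₁ : A × A → A} {s₂ t₂ : B × B → B} (h₁ : EntropyMidpoint s₁ t₁)
    (h₂ : EntropyMidpoint s₂ t₂) :
    EntropyMidpoint
      (fun z : (A × B) × (A × B) => (s₁ (z.1.1, z.2.1), s₂ (z.1.2, z.2.2)))
      (fun z : (A × B) × (A × B) => (t₁ (z.1.1, z.2.1), t₂ (z.1.2, z.2.2))) := by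
  intro f g hfg
  obtain ⟨k, hk, hkf, hkH⟩ := f.exists_disintegration
  obtain ⟨l, hl, hlg, hlH⟩ := g.exists_disintegration
  obtain ⟨σ, hσf, hσg, hσH⟩ := h₁ (f.mapDomain Prod.fst) (g.mapDomain Prod.fst)
    (by simpa only [degree_mapDomain] using hfg)
  have hk' (p : A × A) (hp : σ p ≠ 0) : (k p.1).degree = 1 := by
    refine hk _ fun h => hp ?_
    rw [← hσf] at h
    exact le_antisymm ((le_mapDomain_apply Prod.fst σ p).trans_eq h) zero_le
  have hl' (p : A × A) (hp : σ p ≠ 0) : (l p.2).degree = 1 := by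
    refine hl _ fun h => hp ?_
    rw [← hσg] at h
    exact le_antisymm ((le_mapDomain_apply Prod.snd σ p).trans_eq h) zero_le
  have hdeg (c : ℝ≥0) (u : B →₀ ℝ≥0) (hu : c ≠ 0 → u.degree = 1) : (c • u).degree = c := by
    rcases eq_or_ne c 0 with rfl | hc
    · simp
    · rw [degree_nnreal_smul, hu hc, mul_one]
  choose ρ hρf hρg hρH using fun p : A × A => h₂ (σ p • k p.1) (σ p • l p.2)
    (by rw [hdeg _ _ (hk' p), hdeg _ _ (hl' p)])
  have hρdeg (p : A × A) : (ρ p).degree = σ p := by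
    rw [← degree_mapDomain Prod.fst, hρf, hdeg _ _ (hk' p)]
  set π : (A × B) × (A × B) →₀ ℝ≥0 :=
    ∑ p ∈ σ.support, (ρ p).mapDomain (fun q => ((p.1, q.1), (p.2, q.2))) with hπ
  have hmap (c : A × A → A) (d : B × B → B) :
      π.mapDomain (fun z => (c (z.1.1, z.2.1), d (z.1.2, z.2.2))) =
        ∑ p ∈ σ.support, ((ρ p).mapDomain d).mapDomain (Prod.mk (c p)) := by
    simp only [hπ, mapDomain_finsetSum, ← mapDomain_comp]
    rfl
  have hent (c : A × A → A) (d : B × B → B) :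
      (π.mapDomain (fun z => (c (z.1.1, z.2.1), d (z.1.2, z.2.2)))).negEntropy ≤
        (σ.mapDomain c).negEntropy +
          ∑ p ∈ σ.support, (((ρ p).mapDomain d).negEntropy - mulLog (σ p)) := by
    rw [hmap]
    exact negEntropy_sum_mapDomain_mk_le σ c _ fun p => by rw [degree_mapDomain, hρdeg]
  refine ⟨π, ?_, ?_, ?_⟩
  · refine (hmap Prod.fst Prod.fst).trans ?_
    conv_rhs => rw [← hkf, ← hσf, sum_mapDomain_index (by simp)
      (by intros; rw [add_smul, mapDomain_add]), Finsupp.sum]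
    simp only [hρf]
  · refine (hmap Prod.snd Prod.snd).trans ?_
    conv_rhs => rw [← hlg, ← hσg, sum_mapDomain_index (by simp)
      (by intros; rw [add_smul, mapDomain_add]), Finsupp.sum]
    simp only [hρg]
  · have hkσ : ((f.mapDomain Prod.fst).sum fun a w => (w : ℝ) * (k a).negEntropy) =
        ∑ p ∈ σ.support, (σ p : ℝ) * (k p.1).negEntropy := by
      rw [← hσf, sum_mapDomain_index (by simp) (by intros; push_cast; ring)]
      rfl
    have hlσ : ((g.mapDomain Prod.fst).sum fun a w => (w : ℝ) * (l a).negEntropy) =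
        ∑ p ∈ σ.support, (σ p : ℝ) * (l p.2).negEntropy := by
      rw [← hσg, sum_mapDomain_index (by simp) (by intros; push_cast; ring)]
      rfl
    have hsum : (∑ p ∈ σ.support, (((ρ p).mapDomain s₂).negEntropy - mulLog (σ p))) +
        (∑ p ∈ σ.support, (((ρ p).mapDomain t₂).negEntropy - mulLog (σ p))) ≤
        (∑ p ∈ σ.support, (σ p : ℝ) * (k p.1).negEntropy) +
          ∑ p ∈ σ.support, (σ p : ℝ) * (l p.2).negEntropy := by
      rw [← Finset.sum_add_distrib, ← Finset.sum_add_distrib]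
      refine Finset.sum_le_sum fun p hp => ?_
      have hp' : σ p ≠ 0 := by simpa using hp
      have := hρH p
      rw [negEntropy_smul, negEntropy_smul, hk' p hp', hl' p hp'] at this
      push_cast at this
      linarith
    rw [hkH, hlH, hkσ, hlσ]
    have h1 := hent s₁ s₂
    have h2 := hent t₁ t₂
    linarith

lemma Finsupp.negEntropy_nonpos {f : A →₀ ℝ≥0} (hf : f.degree = 1) : f.negEntropy ≤ 0 := by
  refine Finset.sum_nonpos fun a _ => ?_
  have h : f a ≤ 1 := hf ▸ le_degree a f
  exact mul_nonpos_of_nonneg_of_nonpos (f a).2 (Real.log_nonpos (f a).2 (by exact_mod_cast h))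

lemma pushforward_coe (T : A → B) (π : A →₀ ℝ≥0) :
    pushforward T (fun a => (π a : ℝ)) = fun b => (π.mapDomain T b : ℝ) := by
  classical
  ext b
  rw [mapDomain_apply_eq_sum_filter, NNReal.coe_sum, pushforward]
  refine finsum_mem_eq_sum_of_inter_support_eq _ ?_
  ext a
  simp [and_comm]

lemma relEntropy_coe (f : A →₀ ℝ≥0) : relEntropy (fun a => (f a : ℝ)) = f.negEntropy := by
  refine finsum_eq_sum_of_support_subset _ fun a ha => ?_
  contrapose! ha
  simp_all

lemma finsum_coe (f : A →₀ ℝ≥0) : ∑ᶠ a, (f a : ℝ) = f.degree := by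
  rw [degree_apply, NNReal.coe_sum]
  refine finsum_eq_sum_of_support_subset _ fun a ha => ?_
  simpa using ha

lemma isPMF_coe {f : A →₀ ℝ≥0} : IsPMF (fun a => (f a : ℝ)) ↔ f.degree = 1 := by
  rw [IsPMF, finsum_coe, NNReal.coe_eq_one]
  refine ⟨fun h => h.2.2, fun h => ⟨fun a => (f a).2, f.support.finite_toSet.subset ?_, h⟩⟩
  intro a ha
  simpa using ha

lemma IsPMF.exists_finsupp {μ : A → ℝ} (h : IsPMF μ) :
    ∃ f : A →₀ ℝ≥0, μ = fun a => (f a : ℝ) := by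
  refine ⟨Finsupp.ofSupportFinite (fun a => (μ a).toNNReal) (h.2.1.subset fun a ha => ?_), ?_⟩
  · contrapose! ha
    simp_all
  · ext a
    exact (Real.coe_toNNReal _ (h.1 a)).symm

lemma isCoupling_coe {π : A × B →₀ ℝ≥0} (h : π.degree = 1) :
    IsCoupling (fun p => (π p : ℝ)) (fun a => (π.mapDomain Prod.fst a : ℝ))
      (fun b => (π.mapDomain Prod.snd b : ℝ)) := by
  refine ⟨isPMF_coe.2 h, fun a => ?_, fun b => ?_⟩
  · beta_reduce
    rw [← degree_curry_apply, ← finsum_coe]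
    rfl
  · have h : π.mapDomain Prod.snd b = ((π.mapDomain Prod.swap).curry b).degree := by
      rw [degree_curry_apply, ← mapDomain_comp]
      rfl
    beta_reduce
    rw [h, ← finsum_coe]
    refine finsum_congr fun a => ?_
    rw [curry_apply, show (b, a) = Prod.swap (a, b) from rfl, mapDomain_apply Prod.swap_injective]

end

lemma Finsupp.exists_max_support {A : Type*} [LinearOrder A] {f : A →₀ ℝ≥0} (hf : f ≠ 0) :
    ∃ x, f x ≠ 0 ∧ ∀ a, f a ≠ 0 → a ≤ x := by
  have h : f.support.Nonempty := support_nonempty_iff.2 hf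
  refine ⟨f.support.max' h, by simpa using f.support.max'_mem h, fun a ha => ?_⟩
  exact f.support.le_max' a (by simpa using ha)

/-- Adding an atom of mass `m` at a point `(x, y)` dominating the support of a coupling of `f` and
`g`, where `g y = 0`, preserves the midpoint inequality. -/
lemma negEntropy_midpoint_add_single {f g : ℤ →₀ ℝ≥0} {x y : ℤ} (m : ℝ≥0)
    (hf : ∀ a, f a ≠ 0 → a ≤ x) (hg : ∀ b, g b ≠ 0 → b < y) {π : ℤ × ℤ →₀ ℝ≥0}
    (hπf : π.mapDomain Prod.fst = f) (hπg : π.mapDomain Prod.snd = g)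
    (h : (π.mapDomain fun p => (p.1 + p.2) / 2).negEntropy +
      (π.mapDomain fun p => (p.1 + p.2 + 1) / 2).negEntropy ≤ f.negEntropy + g.negEntropy) :
    ((π + single (x, y) m).mapDomain fun p => (p.1 + p.2) / 2).negEntropy +
      ((π + single (x, y) m).mapDomain fun p => (p.1 + p.2 + 1) / 2).negEntropy ≤
        (f + single x m).negEntropy + (g + single y m).negEntropy := by
  have hx (p : ℤ × ℤ) (hp : π p ≠ 0) : p.1 ≤ x := by
    refine hf _ fun h0 => hp (le_antisymm ?_ zero_le)
    rw [← h0, ← hπf]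
    exact le_mapDomain_apply Prod.fst π p
  have hy (p : ℤ × ℤ) (hp : π p ≠ 0) : p.2 < y := by
    refine hg _ fun h0 => hp (le_antisymm ?_ zero_le)
    rw [← h0, ← hπg]
    exact le_mapDomain_apply Prod.snd π p
  have hzero (u : ℤ × ℤ → ℤ) (b : ℤ) (hu : ∀ p, π p ≠ 0 → u p ≠ b) : π.mapDomain u b = 0 := by
    classical
    rw [mapDomain_apply_eq_sum_filter]
    rw [Finset.filter_false_of_mem fun p hp => hu p (by simpa using hp), Finset.sum_empty]
  have hle (u : ℤ × ℤ → ℤ) (b : ℤ) (hu : ∀ p, π p ≠ 0 → u p = b → p.1 = x) :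
      π.mapDomain u b ≤ f x := by
    rw [← hπf]
    exact mapDomain_apply_le_mapDomain_apply hu
  have hgy : g y = 0 := by
    by_contra h0
    exact lt_irrefl _ (hg y h0)
  simp only [mapDomain_add, mapDomain_single, negEntropy_add_single, hgy, zero_add, mulLog_zero,
    sub_zero]
  rcases Int.even_or_odd' (x + y) with ⟨k, hk | hk⟩
  · rw [hzero _ ((x + y) / 2) fun p hp => by have := hx p hp; have := hy p hp; omega]
    have := mulLog_add_sub_le (hle (fun p => (p.1 + p.2 + 1) / 2) ((x + y + 1) / 2)
      fun p hp _ => by have := hx p hp; have := hy p hp; omega) m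
    rw [zero_add, mulLog_zero]
    linarith
  · rw [hzero _ ((x + y + 1) / 2) fun p hp => by have := hx p hp; have := hy p hp; omega]
    have := mulLog_add_sub_le (hle (fun p => (p.1 + p.2) / 2) ((x + y) / 2)
      fun p hp _ => by have := hx p hp; have := hy p hp; omega) m
    rw [zero_add, mulLog_zero]
    linarith

lemma entropyMidpoint_int :
    EntropyMidpoint (fun p : ℤ × ℤ => (p.1 + p.2) / 2) (fun p => (p.1 + p.2 + 1) / 2) := by
  intro f g hfg
  induction hN : f.support.card + g.support.card using Nat.strong_induction_on
    generalizing f g with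
  | _ N ih =>
  subst hN
  rcases eq_or_ne f 0 with rfl | hf
  · obtain rfl : g = 0 := by rwa [map_zero, eq_comm, degree_eq_zero_iff] at hfg
    exact ⟨0, by simp⟩
  have hg : g ≠ 0 := by
    rintro rfl
    exact hf (by rwa [map_zero, degree_eq_zero_iff] at hfg)
  obtain ⟨x, hx, hxf⟩ := exists_max_support hf
  obtain ⟨y, hy, hyg⟩ := exists_max_support hg
  wlog hle : g y ≤ f x generalizing f g x y
  · obtain ⟨π, h1, h2, h3⟩ := this g f hfg.symm
      (fun N hN f' g' h' hN' => ih N (by omega) f' g' h' hN') hg hf y hy hyg x hx hxf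
      (le_of_not_ge hle)
    refine ⟨π.mapDomain Prod.swap, ?_, ?_, ?_⟩
    · rw [← mapDomain_comp]; exact h2
    · rw [← mapDomain_comp]; exact h1
    · rw [← mapDomain_comp, ← mapDomain_comp]
      simpa only [Function.comp_def, Prod.fst_swap, Prod.snd_swap, add_comm] using h3
  set f' := f - single x (g y) with hf'
  have hff' : f' + single x (g y) = f := tsub_add_cancel_of_le (by simpa using hle)
  have hgg' : g.erase y + single y (g y) = g := erase_add_single y g
  have hf's : f'.support ⊆ f.support := support_tsub
  obtain ⟨π, h1, h2, h3⟩ := ih (f'.support.card + (g.erase y).support.card)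
    (by
      have h1 := Finset.card_le_card hf's
      have h2 := Finset.card_erase_lt_of_mem (s := g.support) (a := y) (by simpa using hy)
      rw [support_erase]
      omega) f' (g.erase y)
    (by
      have h := congrArg degree hff'
      rw [hfg, ← congrArg degree hgg'] at h
      simpa only [map_add, degree_single, add_left_inj] using h) rfl
  refine ⟨π + single (x, y) (g y), ?_, ?_, ?_⟩
  · rw [mapDomain_add, mapDomain_single, h1, hff']
  · rw [mapDomain_add, mapDomain_single, h2, hgg']
  · have := negEntropy_midpoint_add_single (g y)
      (fun a ha => hxf a (by simpa using hf's (by simpa using ha)))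
      (fun b hb => by
        rcases eq_or_ne b y with rfl | hby
        · simp at hb
        · exact lt_of_le_of_ne (hyg b (by rwa [erase_ne hby] at hb)) hby) h1 h2 h3
    rwa [hff', hgg'] at this

lemma entropyMidpoint_pi_int (n : ℕ) :
    EntropyMidpoint (fun (p : (Fin n → ℤ) × (Fin n → ℤ)) i => (p.1 i + p.2 i) / 2)
      (fun p i => (p.1 i + p.2 i + 1) / 2) := by
  induction n with
  | zero => exact EntropyMidpoint.of_unique _ _
  | succ n ih =>
    refine (entropyMidpoint_int.prod ih).congr (Fin.consEquiv fun _ => ℤ) ?_ ?_ <;>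
    · intro p
      ext i
      refine Fin.cases ?_ (fun j => ?_) i <;> simp [Fin.consEquiv]

lemma Int.floor_intCast_div_two (m : ℤ) : ⌊(m : ℚ) / 2⌋ = m / 2 := by
  simpa using Rat.floor_intCast_div_natCast m 2

lemma Int.ceil_intCast_div_two (m : ℤ) : ⌈(m : ℚ) / 2⌉ = (m + 1) / 2 := by
  rw [← neg_neg ⌈(m : ℚ) / 2⌉, ← Int.floor_neg, ← neg_div, ← Int.cast_neg,
    Int.floor_intCast_div_two]
  omega

/-- **Displacement convexity of entropy for the midpoint maps on `ℤⁿ`**: there is a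
coupling `π` of `μ` and `ν` with
`α H(μ|m) + β H(ν|m) ≥ γ H(κ₋|m) + δ H(κ₊|m)`, where `κ∓` are the push-forwards of `π` by
`(x,y) ↦ ⌊(x+y)/2⌋` and `(x,y) ↦ ⌈(x+y)/2⌉` (coordinatewise). -/
theorem entropy_midpoint_zn {n : ℕ} (hn : 1 ≤ n) (α β γ δ : ℝ)
    (hα : 0 < α) (hβ : 0 < β) (hγ : 0 < γ) (hδ : 0 < δ)
    (hmix : max α β ≤ min γ δ)
    (μ ν : (Fin n → ℤ) → ℝ) (hμ : IsPMF μ) (hν : IsPMF ν) :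
    ∃ π : (Fin n → ℤ) × (Fin n → ℤ) → ℝ, IsCoupling π μ ν ∧
      α * relEntropy μ + β * relEntropy ν ≥
        γ * relEntropy
          (pushforward (fun p => fun i => ⌊((p.1 i + p.2 i : ℤ) : ℚ) / 2⌋) π) +
        δ * relEntropy
          (pushforward (fun p => fun i => ⌈((p.1 i + p.2 i : ℤ) : ℚ) / 2⌉) π) := by
  obtain ⟨f, rfl⟩ := hμ.exists_finsupp
  obtain ⟨g, rfl⟩ := hν.exists_finsupp
  rw [isPMF_coe] at hμ hν
  obtain ⟨π, rfl, rfl, hπ⟩ := entropyMidpoint_pi_int n f g (hμ.trans hν.symm)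
  rw [degree_mapDomain] at hμ
  refine ⟨fun p => (π p : ℝ), isCoupling_coe hμ, ?_⟩
  simp only [Int.floor_intCast_div_two, Int.ceil_intCast_div_two, pushforward_coe, relEntropy_coe]
  have hnonpos {B : Type} (u : (Fin n → ℤ) × (Fin n → ℤ) → B) :
      (π.mapDomain u).negEntropy ≤ 0 :=
    negEntropy_nonpos (by rwa [degree_mapDomain])
  obtain ⟨hαM, hβM⟩ := max_le_iff.1 (le_refl (max α β))
  obtain ⟨hγM, hδM⟩ := le_min_iff.1 hmix
  have h1 := mul_le_mul_of_nonpos_right hαM (hnonpos Prod.fst)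
  have h2 := mul_le_mul_of_nonpos_right hβM (hnonpos Prod.snd)
  have h3 := mul_le_mul_of_nonpos_right hγM
    (hnonpos fun (p : (Fin n → ℤ) × (Fin n → ℤ)) i => (p.1 i + p.2 i) / 2)
  have h4 := mul_le_mul_of_nonpos_right hδM
    (hnonpos fun (p : (Fin n → ℤ) × (Fin n → ℤ)) i => (p.1 i + p.2 i + 1) / 2)
  have h5 := mul_le_mul_of_nonneg_left hπ (hα.le.trans hαM)
  linarith
end
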